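/- arXiv:1810.02667 — 2 statements merged into one kernel-verified Lean document; each statement's English description precedes it below -/
import Mathlib

section
/- The canonical monoid homomorphism from the positive monoid Γ₊ = Γ₊(W,γ) to the poset group Γ = Γ(W,γ), induced by sending each generator ⟨w⟩ of the monoid presentation to the corresponding generator ⟨w⟩ of the group presentation, is injective. Equivalently, if two positive words in the generators ⟨w⟩ represent the same element of Γ, then they are positively equal, i.e. they represent the same element of Γ₊. -/
/-!
The proof has two halves: the interval `[1,γ]` is a lattice, and this makes `Γ₊` a Garside monoid
which embeds into its group of fractions.

*Meets.* Let `W` act on `B → ℝ` by the geometric representation `geo`; averaging gives an invariant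
inner product `form`. By Carter's lemma (`rlen_eq`) the reflection length of `w` is the dimension of
the moved space `mv w = im (1 - w)`, and below a common element the reflection order is inclusion
of moved spaces (`rle_of_mv_le`). For `u ≤ γ` let `cone u` be the cone generated by the positive
roots in `mv u`. The key statement (`not_bad`) is that a point common to `cone u` and `cone w`, with
`u, w` below a Coxeter element `c = s₁ ⋯ sₙ` of a standard parabolic subgroup, lies in `mv v` for
some common lower bound `v`. By induction on `n`: if the simple root of `s₁` lies in both moved
spaces it can be split off; otherwise the whole configuration can be conjugated by `s₁`, replacing
`c` by `s₂ ⋯ sₙ s₁`. If the first case never occurs, then the whole `c`-orbit of the point `x` is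
nonnegative, while its sum is fixed by `c` and lies in `mv c`, hence vanishes; so `x = 0`. Applied
to generic positive combinations of the positive roots common to `mv u` and `mv w`, the key
statement produces the meet of `u` and `w` (`exists_meet`).

*Embedding.* The monoid `Γ₊` acts on pairs `(h, m)` with `h ∈ [1,γ]` and `m ∈ Γ₊`, thought of as
products `⟨h⟩ m`: the generator `⟨p⟩` sends `(h, m)` to `(p a, ⟨a⁻¹ h⟩ m)`, where `a` is the meet of
`p⁻¹ γ` and `h` (`step`, `act`). Since `⟨γ⟩` sends `(h, m)` to `(γ, ⟨h⟩ m)`, it is left cancellable;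
as conjugation by `γ` gives `⟨γ⟩ m = ψ(m) ⟨γ⟩` for an automorphism `ψ`, it is also right
cancellable, and its powers form an Ore set. So `Γ₊` embeds into the Ore localization at `⟨γ⟩`, in
which all generators are invertible, and this embedding factors through `Γ`.
-/

variable {B : Type*} {W : Type*} [Group W] {M : CoxeterMatrix B}

/-- The reflection length of `w`: the least `k` such that `w` is a product of `k`
reflections (conjugates of simple reflections). -/
noncomputable def rlen (cs : CoxeterSystem M W) (w : W) : ℕ :=
  sInf {k | ∃ l : List W, (∀ t ∈ l, cs.IsReflection t) ∧ l.length = k ∧ l.prod = w}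

/-- The reflection (absolute) order on `W`: `u ≤ w` iff `ℓ(w) = ℓ(u) + ℓ(u⁻¹w)`. -/
def rle (cs : CoxeterSystem M W) (u w : W) : Prop :=
  rlen cs w = rlen cs u + rlen cs (u⁻¹ * w)

/-- A Coxeter element: a conjugate of a product of all the simple reflections,
each occurring exactly once, in some order. -/
def IsCoxeterElement [Fintype B] (cs : CoxeterSystem M W) (γ : W) : Prop :=
  ∃ (v : W) (l : List B), l.Nodup ∧ (∀ i : B, i ∈ l) ∧ γ = v * cs.wordProd l * v⁻¹

/-- The generating set of the poset group/monoid: the interval `[1,γ]` minus the identity. -/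
abbrev NCGen (cs : CoxeterSystem M W) (γ : W) : Type _ :=
  {w : W // w ≠ 1 ∧ rle cs w γ}

/-- The defining relations of the positive monoid `Γ₊(W,γ)`:
`⟨w₁⟩⟨w₂⟩ = ⟨w₃⟩` whenever `w₁w₂ = w₃` in `W` and `ℓ(w₁) + ℓ(w₂) = ℓ(w₃)`. -/
def posRels (cs : CoxeterSystem M W) (γ : W) :
    FreeMonoid (NCGen cs γ) → FreeMonoid (NCGen cs γ) → Prop :=
  fun x y => ∃ w₁ w₂ w₃ : NCGen cs γ,
    x = FreeMonoid.of w₁ * FreeMonoid.of w₂ ∧ y = FreeMonoid.of w₃ ∧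
    (w₁ : W) * (w₂ : W) = (w₃ : W) ∧
    rlen cs (w₁ : W) + rlen cs (w₂ : W) = rlen cs (w₃ : W)

/-- The positive monoid `Γ₊(W,γ)`, presented by the generators `⟨w⟩`, `w ∈ [1,γ] \ {1}`,
and the relations `posRels`. -/
abbrev PosMonoid (cs : CoxeterSystem M W) (γ : W) := PresentedMonoid (posRels cs γ)

open Classical in
/-- The generator `⟨w⟩` of `Γ₊(W,γ)` for `w ∈ [1,γ]`, interpreting `⟨1⟩` as the
identity of the monoid (and defaulting to the identity off the interval). -/
noncomputable def pgen (cs : CoxeterSystem M W) (γ : W) (w : W) : PosMonoid cs γ :=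
  if h : w ≠ 1 ∧ rle cs w γ then PresentedMonoid.of (posRels cs γ) ⟨w, h⟩ else 1

/-- The defining relations of the poset group `Γ(W,γ)`:
`⟨w₁⟩⟨w₂⟩ = ⟨w₃⟩` whenever `w₁w₂ = w₃` in `W` and `ℓ(w₁) + ℓ(w₂) = ℓ(w₃)`. -/
def posetGroupRels (cs : CoxeterSystem M W) (γ : W) : Set (FreeGroup (NCGen cs γ)) :=
  {x | ∃ w₁ w₂ w₃ : NCGen cs γ,
    x = FreeGroup.of w₁ * FreeGroup.of w₂ * (FreeGroup.of w₃)⁻¹ ∧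
    (w₁ : W) * (w₂ : W) = (w₃ : W) ∧
    rlen cs (w₁ : W) + rlen cs (w₂ : W) = rlen cs (w₃ : W)}

/-- The poset group `Γ(W,γ)`, presented by the generators `⟨w⟩`, `w ∈ [1,γ] \ {1}`,
and the relations `posetGroupRels`. -/
abbrev PosetGroup (cs : CoxeterSystem M W) (γ : W) := PresentedGroup (posetGroupRels cs γ)

/-- The canonical monoid homomorphism `Γ₊(W,γ) → Γ(W,γ)`, induced by sending each
generator `⟨w⟩` of the monoid presentation to the corresponding group generator. -/
def canHom (cs : CoxeterSystem M W) (γ : W) : PosMonoid cs γ →* PosetGroup cs γ :=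
  PresentedMonoid.lift (fun x => PresentedGroup.of (rels := posetGroupRels cs γ) x) (by
    intro a b hab
    obtain ⟨w₁, w₂, w₃, ha, hb, hmul, hlen⟩ := hab
    subst ha hb
    have hmem : FreeGroup.of w₁ * FreeGroup.of w₂ * (FreeGroup.of w₃)⁻¹ ∈
        posetGroupRels cs γ := ⟨w₁, w₂, w₃, rfl, hmul, hlen⟩
    have h1 : (PresentedGroup.of (rels := posetGroupRels cs γ) w₁) *
        PresentedGroup.of w₂ * (PresentedGroup.of w₃)⁻¹ = 1 :=
      (QuotientGroup.eq_one_iff _).mpr (Subgroup.subset_normalClosure hmem)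
    have h2 : (PresentedGroup.of (rels := posetGroupRels cs γ) w₁) *
        PresentedGroup.of w₂ = PresentedGroup.of w₃ := mul_inv_eq_one.mp h1
    simpa using h2)

set_option linter.unusedSectionVars false
set_option linter.unusedSimpArgs false

/-! ### The geometric representation -/

namespace NonCrossing

section Geometric

variable [Fintype B] [DecidableEq B]

/-- The simple root of the geometric representation `B → ℝ` attached to `i`. -/
def sroot (i : B) : B → ℝ := Pi.single i 1

/-- The simple coroot `x ↦ 2 B(x, αᵢ)`, where `B(αᵢ, αⱼ) = -cos (π / M i j)`. The value `M i j = 0`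
stands for an infinite order, and `π / 0 = 0` then gives the correct entry `-1`. -/
noncomputable def scoroot (M : CoxeterMatrix B) (i : B) : (B → ℝ) →ₗ[ℝ] ℝ :=
  ∑ j, (-2 * Real.cos (Real.pi / M i j)) • LinearMap.proj j

/-- The simple reflection `x ↦ x - 2 B(x, αᵢ) αᵢ` of the geometric representation. -/
noncomputable def sref (M : CoxeterMatrix B) (i : B) : Module.End ℝ (B → ℝ) :=
  LinearMap.id - (scoroot M i).smulRight (sroot i)

lemma scoroot_sroot (i j : B) : scoroot M i (sroot j) = -2 * Real.cos (Real.pi / M i j) := by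
  simp [scoroot, sroot, Pi.single_apply]

lemma scoroot_sroot_self (i : B) : scoroot M i (sroot i) = 2 := by
  simp [scoroot_sroot]

lemma sref_apply (i : B) (x : B → ℝ) : sref M i x = x - scoroot M i x • sroot i := by
  simp [sref]

lemma sref_sroot (i : B) : sref M i (sroot i) = -sroot i := by
  rw [sref_apply, scoroot_sroot_self]; module

lemma sref_sref (i : B) (x : B → ℝ) : sref M i (sref M i x) = x := by
  rw [sref_apply i x, map_sub, map_smul, sref_sroot, sref_apply]; module

/-- Vectors of the plane spanned by `αᵢ` and `αⱼ`, in sine coordinates adapted to the dihedral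
group generated by the two reflections. -/
noncomputable def dih (i j : B) (p q : ℝ) : B → ℝ := Real.sin p • sroot i + Real.sin q • sroot j

lemma sref_dih_left (i j : B) {p q r : ℝ} (hp : p = q + Real.pi / M i j)
    (hr : r = q - Real.pi / M i j) : sref M i (dih i j p q) = dih i j r q := by
  subst hp hr
  rw [sref_apply, dih, dih, map_add, map_smul, map_smul, scoroot_sroot_self, scoroot_sroot,
    Real.sin_add, Real.sin_sub]
  simp only [smul_eq_mul]
  module

lemma sref_dih_left' (i j : B) {p q r : ℝ} (hp : p = q - Real.pi / M i j)
    (hr : r = q + Real.pi / M i j) : sref M i (dih i j p q) = dih i j r q := by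
  rw [← sref_dih_left i j hr hp, sref_sref]

lemma dih_swap (i j : B) (p q : ℝ) : dih i j p q = dih j i q p := by
  rw [dih, dih, add_comm]

lemma sref_dih_right (i j : B) {p q r : ℝ} (hq : q = p - Real.pi / M i j)
    (hr : r = p + Real.pi / M i j) : sref M j (dih i j p q) = dih i j p r := by
  rw [dih_swap, dih_swap i, sref_dih_left' j i (q := p)] <;> rwa [M.symmetric j i]

lemma pow_dih (i j : B) (k : ℕ) (p : ℝ) :
    ((sref M i * sref M j) ^ k) (dih i j p (p - Real.pi / M i j)) =
      dih i j (p + k * (2 * (Real.pi / M i j)))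
        (p + k * (2 * (Real.pi / M i j)) - Real.pi / M i j) := by
  induction k with
  | zero => simp
  | succ k ih =>
    rw [pow_succ', Module.End.mul_apply, ih, Module.End.mul_apply, sref_dih_right i j rfl rfl,
      sref_dih_left' i j (r := p + k * (2 * (Real.pi / M i j)) + 2 * (Real.pi / M i j))
        (by ring) (by ring)]
    congr 1 <;> push_cast <;> ring

/-- The braid relations hold because `sᵢ sⱼ` acts on sine coordinates of the plane of `αᵢ`, `αⱼ` as
a rotation by `2π / M i j`. -/
lemma isLiftable_sref : M.IsLiftable (sref M) := by
  intro i j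
  by_cases hij : i = j
  · subst hij
    rw [M.diagonal, pow_one]
    refine LinearMap.ext fun x => ?_
    simp [sref_sref]
  by_cases hm : M i j = 0
  · simp [hm]
  have hm2 : 2 ≤ M i j := by
    have := M.off_diagonal i j hij
    omega
  set θ := Real.pi / M i j with hθ
  have hmpos : (0 : ℝ) < M i j := by positivity
  have hs : 0 < Real.sin θ := by
    apply Real.sin_pos_of_pos_of_lt_pi
    · positivity
    · rw [hθ, div_lt_iff₀ hmpos]
      have : (2 : ℝ) ≤ M i j := by exact_mod_cast hm2
      nlinarith [Real.pi_pos]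
  have hper (p : ℝ) : ((sref M i * sref M j) ^ M i j) (dih i j p (p - θ)) = dih i j p (p - θ) := by
    rw [pow_dih]
    have : (M i j : ℝ) * (2 * (Real.pi / M i j)) = 2 * Real.pi := by field_simp
    rw [this, dih, dih, Real.sin_add_two_pi, add_sub_right_comm, Real.sin_add_two_pi]
  have hi : ((sref M i * sref M j) ^ M i j) (sroot i) = sroot i := by
    have h := hper θ
    simp only [dih, sub_self, Real.sin_zero, zero_smul, add_zero, map_smul] at h
    exact smul_right_injective _ hs.ne' h
  have hj : ((sref M i * sref M j) ^ M i j) (sroot j) = sroot j := by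
    have h := hper 0
    simp only [dih, zero_sub, Real.sin_zero, zero_smul, zero_add, map_smul, Real.sin_neg] at h
    exact smul_right_injective _ (neg_ne_zero.2 hs.ne') h
  have hperp (x : B → ℝ) (h1 : scoroot M i x = 0) (h2 : scoroot M j x = 0) :
      ((sref M i * sref M j) ^ M i j) x = x := by
    generalize M i j = k
    induction k with
    | zero => simp
    | succ k ih => rw [pow_succ, Module.End.mul_apply, Module.End.mul_apply,
        sref_apply j, h2, zero_smul, sub_zero, sref_apply i, h1, zero_smul, sub_zero, ih]
  refine LinearMap.ext fun x => ?_
  -- Subtract from `x` its projection onto the plane; the rest is fixed by both reflections.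
  set c := Real.cos θ
  have hsc : Real.sin θ ^ 2 + c ^ 2 = 1 := Real.sin_sq_add_cos_sq θ
  set a := (scoroot M i x + c * scoroot M j x) / (2 * Real.sin θ ^ 2) with ha
  set b := (c * scoroot M i x + scoroot M j x) / (2 * Real.sin θ ^ 2) with hb
  have e1 : scoroot M i (x - a • sroot i - b • sroot j) = 0 := by
    simp only [map_sub, map_smul, scoroot_sroot_self, scoroot_sroot, smul_eq_mul]
    rw [ha, hb]
    field_simp
    linear_combination (scoroot M i x) * hsc
  have e2 : scoroot M j (x - a • sroot i - b • sroot j) = 0 := by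
    simp only [map_sub, map_smul, scoroot_sroot_self, scoroot_sroot, smul_eq_mul, M.symmetric j i]
    rw [ha, hb]
    field_simp
    linear_combination (scoroot M j x) * hsc
  have := hperp _ e1 e2
  rw [map_sub, map_sub, map_smul, map_smul, hi, hj] at this
  simpa using this

/-- The geometric representation of a Coxeter group. -/
noncomputable def geo (cs : CoxeterSystem M W) : W →* Module.End ℝ (B → ℝ) :=
  cs.lift ⟨sref M, isLiftable_sref⟩

variable (cs : CoxeterSystem M W)

lemma geo_simple (i : B) : geo cs (cs.simple i) = sref M i :=
  cs.lift_apply_simple isLiftable_sref i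

lemma geo_mul (v w : W) (x : B → ℝ) : geo cs (v * w) x = geo cs v (geo cs w x) := by
  rw [map_mul, Module.End.mul_apply]

lemma geo_one (x : B → ℝ) : geo cs 1 x = x := by
  rw [map_one, Module.End.one_apply]

lemma geo_inv_geo (w : W) (x : B → ℝ) : geo cs w⁻¹ (geo cs w x) = x := by
  rw [← geo_mul, inv_mul_cancel, geo_one]

lemma geo_geo_inv (w : W) (x : B → ℝ) : geo cs w (geo cs w⁻¹ x) = x := by
  rw [← geo_mul, mul_inv_cancel, geo_one]

lemma geo_injective (w : W) : Function.Injective (geo cs w) :=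
  Function.LeftInverse.injective (geo_inv_geo cs w)

/-- In a finite Coxeter group no pair of simple reflections has infinite order: otherwise
`sᵢ sⱼ` would act as an infinite-order shear on `αᵢ`. -/
lemma entry_ne_zero (cs : CoxeterSystem M W) [Finite W] (i j : B) : M i j ≠ 0 := by
  intro h0
  have hij : i ≠ j := by
    rintro rfl
    simp at h0
  have hc1 : scoroot M i (sroot j) = -2 := by simp [scoroot_sroot, h0]
  have hc2 : scoroot M j (sroot i) = -2 := by simp [scoroot_sroot, M.symmetric j i, h0]
  have hpow (k : ℕ) : ((sref M i * sref M j) ^ k) (sroot i) =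
      sroot i + (2 * k : ℝ) • (sroot i + sroot j) := by
    induction k with
    | zero => simp
    | succ k ih =>
      rw [pow_succ', Module.End.mul_apply, ih, Module.End.mul_apply]
      simp only [sref_apply, map_add, map_smul, map_sub, hc1, hc2, scoroot_sroot_self, smul_eq_mul]
      push_cast
      module
  have ho := orderOf_pos (cs.simple i * cs.simple j)
  have h1 := hpow (orderOf (cs.simple i * cs.simple j))
  rw [← geo_simple cs, ← geo_simple cs, ← map_mul, ← map_pow, pow_orderOf_eq_one, geo_one] at h1
  have h2 := congrFun h1 i
  simp [sroot, hij] at h2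
  exact h2 (isOfFinOrder_of_finite _)

lemma geo_alternatingWord (i j : B) (k : ℕ) :
    geo cs (cs.wordProd (CoxeterSystem.alternatingWord i j k)) (dih i j (Real.pi / M i j) 0) =
      if Even k then dih i j ((k + 1) * (Real.pi / M i j)) (k * (Real.pi / M i j))
      else dih i j (k * (Real.pi / M i j)) ((k + 1) * (Real.pi / M i j)) := by
  induction k with
  | zero => simp [CoxeterSystem.alternatingWord, geo_one]
  | succ k ih =>
    rw [CoxeterSystem.alternatingWord_succ', cs.wordProd_cons, geo_mul, ih, geo_simple]
    by_cases hk : Even k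
    · have hk' : ¬ Even (k + 1) := by simpa [parity_simps] using hk
      rw [if_pos hk, if_pos hk, if_neg hk', sref_dih_right i j
        (r := ((k + 1 : ℕ) + 1) * (Real.pi / M i j))]
      · push_cast; rfl
      · ring
      · push_cast; ring
    · have hk' : Even (k + 1) := by simpa [parity_simps] using hk
      rw [if_neg hk, if_neg hk, if_pos hk', sref_dih_left' i j
        (r := ((k + 1 : ℕ) + 1) * (Real.pi / M i j))]
      · push_cast; rfl
      · ring
      · push_cast; ring

lemma exists_alternatingWord_suffix (i j : B) (m k : ℕ) (h : m ≤ k) :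
    ∃ p : List B, p.length + m = k ∧
      CoxeterSystem.alternatingWord i j k = p ++ CoxeterSystem.alternatingWord i j m := by
  induction k, h using Nat.le_induction with
  | base => exact ⟨[], by simp⟩
  | succ k hk ih =>
    obtain ⟨p, hp, e⟩ := ih
    rw [CoxeterSystem.alternatingWord_succ', e]
    exact ⟨_ :: p, by simp; omega, rfl⟩

/-- Tits' positivity theorem: `w αᵢ` is a positive root when `ℓ(w sᵢ) > ℓ(w)`. One splits off from
`w` a maximal alternating suffix in `sᵢ` and a right descent `sⱼ`, and computes in the dihedral
group generated by `sᵢ` and `sⱼ`. -/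
lemma geo_sroot_nonneg [Finite W] (w : W) (i : B) (hw : ¬ cs.IsRightDescent w i) (b : B) :
    0 ≤ geo cs w (sroot i) b := by
  classical
  induction hn : cs.length w using Nat.strong_induction_on generalizing w i b with
  | _ n ih =>
  subst hn
  by_cases h1 : w = 1
  · subst h1
    rw [geo_one, sroot, Pi.single_apply]
    split_ifs <;> norm_num
  obtain ⟨j, hj⟩ := cs.exists_rightDescent_of_ne_one h1
  have hij : i ≠ j := by
    rintro rfl
    exact hw hj
  have hjl := cs.isRightDescent_iff.1 hj
  let P : ℕ → Prop := fun k => ∃ v, w = v * cs.wordProd (CoxeterSystem.alternatingWord i j k) ∧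
    cs.length v + k = cs.length w
  have hP1 : P 1 := ⟨w * cs.simple j, by simp [CoxeterSystem.alternatingWord], hjl⟩
  set k := Nat.findGreatest P (cs.length w) with hk
  have hk1 : 1 ≤ k := Nat.le_findGreatest (by omega) hP1
  obtain ⟨v, hv, hlen⟩ : P k := Nat.findGreatest_spec (m := 1) (by omega) hP1
  have hPk : ¬ P (k + 1) := by
    intro h
    obtain ⟨v', -, h'⟩ := id h
    have := Nat.le_findGreatest (P := P) (n := cs.length w) (by omega) h
    omega
  have hx : ¬ cs.IsRightDescent v (if Even k then j else i) := by
    intro h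
    rw [cs.isRightDescent_iff] at h
    refine hPk ⟨v * cs.simple (if Even k then j else i), ?_, by omega⟩
    rw [CoxeterSystem.alternatingWord_succ', cs.wordProd_cons, mul_assoc,
      cs.simple_mul_simple_cancel_left]
    exact hv
  obtain ⟨k', hk'⟩ : ∃ k', k = k' + 1 := ⟨k - 1, by omega⟩
  have hy : ¬ cs.IsRightDescent v (if Even k' then j else i) := by
    intro h
    rw [cs.isRightDescent_iff] at h
    rw [hk', CoxeterSystem.alternatingWord_succ', cs.wordProd_cons, ← mul_assoc] at hv
    have h2 := cs.length_mul_le (v * cs.simple (if Even k' then j else i))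
      (cs.wordProd (CoxeterSystem.alternatingWord i j k'))
    have h3 := cs.length_wordProd_le (CoxeterSystem.alternatingWord i j k')
    rw [CoxeterSystem.length_alternatingWord] at h3
    rw [← hv] at h2
    omega
  have hvij : ¬ cs.IsRightDescent v i ∧ ¬ cs.IsRightDescent v j := by
    by_cases he : Even k'
    · have : ¬ Even k := by rw [hk']; simpa [parity_simps] using he
      rw [if_neg this] at hx
      rw [if_pos he] at hy
      exact ⟨hx, hy⟩
    · have : Even k := by rw [hk']; simpa [parity_simps] using he
      rw [if_pos this] at hx
      rw [if_neg he] at hy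
      exact ⟨hy, hx⟩
  have hm0 := entry_ne_zero cs i j
  have hm1 := M.off_diagonal i j hij
  have hkm : k < M i j := by
    by_contra hcon
    obtain ⟨p, hp, e⟩ := exists_alternatingWord_suffix i j (M i j) k (by omega)
    have hb := cs.wordProd_braidWord_eq i j
    obtain ⟨m', hm'⟩ : ∃ m', M i j = m' + 1 := ⟨M i j - 1, by omega⟩
    rw [CoxeterSystem.braidWord, CoxeterSystem.braidWord, M.symmetric j i] at hb
    rw [e, cs.wordProd_append, hb, hm', CoxeterSystem.alternatingWord_succ,
      cs.wordProd_concat] at hv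
    have hws : w * cs.simple i = v * (cs.wordProd p *
        cs.wordProd (CoxeterSystem.alternatingWord i j m')) := by
      rw [hv]
      simp [mul_assoc]
    apply hw
    rw [CoxeterSystem.IsRightDescent, hws]
    have h1 := cs.length_mul_le v (cs.wordProd p *
        cs.wordProd (CoxeterSystem.alternatingWord i j m'))
    have h2 := cs.length_mul_le (cs.wordProd p)
        (cs.wordProd (CoxeterSystem.alternatingWord i j m'))
    have h3 := cs.length_wordProd_le (CoxeterSystem.alternatingWord i j m')
    have h4 := cs.length_wordProd_le p
    rw [CoxeterSystem.length_alternatingWord] at h3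
    omega
  have hmpos : (0 : ℝ) < M i j := by positivity
  have hs : 0 < Real.sin (Real.pi / M i j) := by
    apply Real.sin_pos_of_pos_of_lt_pi
    · positivity
    · rw [div_lt_iff₀ hmpos]
      have : (2 : ℝ) ≤ M i j := by exact_mod_cast (by omega : 2 ≤ M i j)
      nlinarith [Real.pi_pos]
  have hsin (l : ℕ) (hl : l ≤ M i j) : 0 ≤ Real.sin (l * (Real.pi / M i j)) := by
    apply Real.sin_nonneg_of_nonneg_of_le_pi (by positivity)
    rw [← mul_div_assoc, div_le_iff₀ hmpos, mul_comm]
    have : (l : ℝ) ≤ M i j := by exact_mod_cast hl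
    nlinarith [Real.pi_pos]
  have hdih (p q : ℝ) (hp : 0 ≤ Real.sin p) (hq : 0 ≤ Real.sin q) :
      0 ≤ geo cs v (dih i j p q) b := by
    rw [dih, map_add, map_smul, map_smul]
    simp only [Pi.add_apply, Pi.smul_apply, smul_eq_mul]
    have := ih _ (by omega) v i hvij.1 b rfl
    have := ih _ (by omega) v j hvij.2 b rfl
    positivity
  have hfin : 0 ≤ geo cs w (dih i j (Real.pi / M i j) 0) b := by
    rw [hv, geo_mul, geo_alternatingWord]
    have s1 := hsin k (by omega)
    have s2 := hsin (k + 1) (by omega)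
    push_cast at s2
    split_ifs
    · exact hdih _ _ s2 s1
    · exact hdih _ _ s1 s2
  rw [dih, Real.sin_zero, zero_smul, add_zero, map_smul, Pi.smul_apply, smul_eq_mul] at hfin
  exact nonneg_of_mul_nonneg_right hfin hs

lemma geo_sroot_nonpos [Finite W] (w : W) (i : B) (hw : cs.IsRightDescent w i) (b : B) :
    geo cs w (sroot i) b ≤ 0 := by
  have h := geo_sroot_nonneg cs (w * cs.simple i) i
    (cs.isRightDescent_iff_not_isRightDescent_mul.1 hw) b
  rw [geo_mul, geo_simple, sref_sroot, map_neg] at h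
  simpa using h

end Geometric

end NonCrossing


/-! ### The invariant form and roots -/

namespace NonCrossing

section Form

variable [Fintype B] [DecidableEq B] [Fintype W] (cs : CoxeterSystem M W)

/-- A `W`-invariant inner product on the geometric representation, obtained by averaging the
standard one over the finite group `W`. -/
noncomputable def form : (B → ℝ) →ₗ[ℝ] (B → ℝ) →ₗ[ℝ] ℝ :=
  LinearMap.mk₂ ℝ (fun x y => ∑ w, geo cs w x ⬝ᵥ geo cs w y)
    (by intros; simp [add_dotProduct, Finset.sum_add_distrib])
    (by intros; simp [Finset.mul_sum])
    (by intros; simp [dotProduct_add, Finset.sum_add_distrib])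
    (by intros; simp [Finset.mul_sum])

lemma form_apply (x y : B → ℝ) : form cs x y = ∑ w, geo cs w x ⬝ᵥ geo cs w y := rfl

lemma form_comm (x y : B → ℝ) : form cs x y = form cs y x := by
  simp only [form_apply, dotProduct_comm]

lemma form_geo (w : W) (x y : B → ℝ) : form cs (geo cs w x) (geo cs w y) = form cs x y := by
  simp only [form_apply, ← geo_mul]
  exact Fintype.sum_equiv (Equiv.mulRight w) _ _ fun _ => rfl

lemma form_geo_left (w : W) (x y : B → ℝ) :
    form cs (geo cs w x) y = form cs x (geo cs w⁻¹ y) := by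
  rw [← form_geo cs w x, geo_geo_inv]

lemma form_self_pos {x : B → ℝ} (hx : x ≠ 0) : 0 < form cs x x := by
  rw [form_apply]
  have h0 (y : B → ℝ) : 0 ≤ y ⬝ᵥ y := by
    simp only [dotProduct]
    exact Finset.sum_nonneg fun i _ => mul_self_nonneg _
  refine Finset.sum_pos' (fun w _ => h0 _) ⟨1, Finset.mem_univ _, ?_⟩
  rw [geo_one]
  exact lt_of_le_of_ne (h0 x) fun h => hx (dotProduct_self_eq_zero.1 h.symm)

lemma eq_zero_of_form_self {x : B → ℝ} (hx : form cs x x = 0) : x = 0 := by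
  by_contra h
  exact (form_self_pos cs h).ne' hx

lemma sroot_ne_zero (i : B) : sroot i ≠ 0 := by
  intro h
  simpa [sroot] using congrFun h i

/-- Over the invariant form the simple reflection is the orthogonal one. -/
lemma form_sroot (i : B) (x : B → ℝ) :
    2 * form cs x (sroot i) = scoroot M i x * form cs (sroot i) (sroot i) := by
  have h := form_geo cs (cs.simple i) x (sroot i)
  rw [geo_simple, sref_sroot, sref_apply, map_sub, map_smul, map_neg, LinearMap.sub_apply,
    LinearMap.smul_apply, smul_eq_mul] at h
  linarith

/-- `β` is a root, i.e. a translate of a simple root, and `t` is its reflection. -/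
def RootOf (t : W) (β : B → ℝ) : Prop :=
  ∃ w i, t = w * cs.simple i * w⁻¹ ∧ β = geo cs w (sroot i)

variable {cs} {t : W} {β : B → ℝ}

lemma rootOf_simple (i : B) : RootOf cs (cs.simple i) (sroot i) :=
  ⟨1, i, by simp, (geo_one cs _).symm⟩

lemma exists_rootOf (h : cs.IsReflection t) : ∃ β, RootOf cs t β := by
  obtain ⟨w, i, rfl⟩ := h
  exact ⟨_, w, i, rfl, rfl⟩

lemma RootOf.isReflection (h : RootOf cs t β) : cs.IsReflection t := by
  obtain ⟨w, i, rfl, -⟩ := h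
  exact ⟨w, i, rfl⟩

lemma RootOf.mul_self (h : RootOf cs t β) : t * t = 1 := h.isReflection.mul_self

lemma RootOf.inv (h : RootOf cs t β) : t⁻¹ = t := h.isReflection.inv

lemma RootOf.ne_zero (h : RootOf cs t β) : β ≠ 0 := by
  obtain ⟨w, i, -, rfl⟩ := h
  intro h
  exact sroot_ne_zero i (geo_injective cs w (by rw [h, map_zero]))

lemma RootOf.conj (h : RootOf cs t β) (g : W) : RootOf cs (g * t * g⁻¹) (geo cs g β) := by
  obtain ⟨w, i, rfl, rfl⟩ := h
  exact ⟨g * w, i, by group, (geo_mul cs _ _ _).symm⟩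

lemma RootOf.neg (h : RootOf cs t β) : RootOf cs t (-β) := by
  obtain ⟨w, i, rfl, rfl⟩ := h
  refine ⟨w * cs.simple i, i, ?_, ?_⟩
  · simp [mul_assoc]
  · rw [geo_mul, geo_simple, sref_sroot, map_neg]

lemma RootOf.apply (h : RootOf cs t β) (x : B → ℝ) :
    geo cs t x = x - (2 * form cs x β / form cs β β) • β := by
  obtain ⟨w, i, rfl, rfl⟩ := h
  have hp := form_self_pos cs (sroot_ne_zero i)
  have := form_sroot cs i (geo cs w⁻¹ x)
  rw [form_geo_left, inv_inv] at this
  rw [form_geo, this, mul_div_cancel_right₀ _ hp.ne', geo_mul, geo_mul, geo_simple, sref_apply,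
    map_sub, map_smul, geo_geo_inv]

lemma RootOf.apply_self (h : RootOf cs t β) : geo cs t β = -β := by
  have := form_self_pos cs h.ne_zero
  rw [h.apply, mul_div_cancel_right₀ _ this.ne']
  module

lemma RootOf.nonneg_or_nonpos (h : RootOf cs t β) : 0 ≤ β ∨ β ≤ 0 := by
  obtain ⟨w, i, rfl, rfl⟩ := h
  by_cases hw : cs.IsRightDescent w i
  · exact Or.inr fun b => geo_sroot_nonpos cs w i hw b
  · exact Or.inl fun b => geo_sroot_nonneg cs w i hw b

variable (cs)

lemma finite_roots : {β | ∃ t, RootOf cs t β}.Finite := by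
  refine (Set.finite_range fun p : W × B => geo cs p.1 (sroot p.2)).subset ?_
  rintro β ⟨t, w, i, -, rfl⟩
  exact ⟨(w, i), rfl⟩

/-! ### Moved spaces and Carter's lemma -/

/-- The moved space `im (1 - w)`. -/
noncomputable def mv (w : W) : Submodule ℝ (B → ℝ) := LinearMap.range (1 - geo cs w)

lemma mem_mv {w : W} {y : B → ℝ} : y ∈ mv cs w ↔ ∃ x, x - geo cs w x = y := Iff.rfl

lemma sub_mem_mv (w : W) (x : B → ℝ) : x - geo cs w x ∈ mv cs w := ⟨x, rfl⟩

lemma mv_one : mv cs (1 : W) = ⊥ := by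
  rw [mv, map_one, sub_self, LinearMap.range_zero]

lemma finrank_mv_one : Module.finrank ℝ (mv cs (1 : W)) = 0 := by
  rw [mv_one, finrank_bot]

lemma form_eq_zero_of_mem_mv {w : W} {x y : B → ℝ} (hx : geo cs w x = x) (hy : y ∈ mv cs w) :
    form cs x y = 0 := by
  obtain ⟨z, rfl⟩ := (mem_mv cs).1 hy
  nth_rw 1 [map_sub, ← form_geo cs w x z, hx]
  exact sub_self _

lemma mv_mul_le (g h : W) : mv cs (g * h) ≤ mv cs g ⊔ mv cs h := by
  rintro _ ⟨x, rfl⟩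
  rw [show (1 - geo cs (g * h)) x = (geo cs h x - geo cs g (geo cs h x)) + (x - geo cs h x) by
    rw [LinearMap.sub_apply, geo_mul]; simp]
  exact Submodule.add_mem_sup (sub_mem_mv cs _ _) (sub_mem_mv cs _ _)

lemma mv_inv (g : W) : mv cs g⁻¹ = mv cs g := by
  have key (g : W) : mv cs g⁻¹ ≤ mv cs g := by
    rintro _ ⟨x, rfl⟩
    refine ⟨-geo cs g⁻¹ x, ?_⟩
    simp only [LinearMap.sub_apply, Module.End.one_apply, map_neg, geo_geo_inv]
    module
  refine le_antisymm (key g) ?_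
  simpa using key g⁻¹

lemma geo_mem_mv_conj {w : W} (g : W) {y : B → ℝ} (hy : y ∈ mv cs w) :
    geo cs g y ∈ mv cs (g * w * g⁻¹) := by
  obtain ⟨x, rfl⟩ := (mem_mv cs).1 hy
  refine ⟨geo cs g x, ?_⟩
  rw [LinearMap.sub_apply, Module.End.one_apply, geo_mul, geo_mul, geo_inv_geo, map_sub]

lemma mv_conj (g w : W) : mv cs (g * w * g⁻¹) = (mv cs w).map (geo cs g) := by
  refine le_antisymm (fun y hy => ?_) ?_
  · refine ⟨geo cs g⁻¹ y, ?_, geo_geo_inv cs g y⟩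
    have := geo_mem_mv_conj cs g⁻¹ hy
    rwa [show g⁻¹ * (g * w * g⁻¹) * g⁻¹⁻¹ = w by group] at this
  · rintro _ ⟨y, hy, rfl⟩
    exact geo_mem_mv_conj cs g hy

lemma pow_sub_mem_mv (w : W) (x : B → ℝ) (k : ℕ) : x - geo cs (w ^ k) x ∈ mv cs w := by
  induction k with
  | zero => simp
  | succ k ih =>
    have := add_mem ih (sub_mem_mv cs w (geo cs (w ^ k) x))
    rw [pow_succ', geo_mul]
    rwa [sub_add_sub_cancel] at this

/-- The moved space is the orthogonal complement of the fixed space. -/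
lemma mem_mv_of_perp {w : W} {y : B → ℝ}
    (h : ∀ x, geo cs w x = x → form cs x y = 0) : y ∈ mv cs w := by
  set N := orderOf w with hN
  have hN0 : 0 < N := orderOf_pos w
  -- The average of `y` over the powers of `w` is fixed, hence orthogonal to itself.
  set a := ∑ k ∈ Finset.range N, geo cs (w ^ k) y with ha
  have hfix : geo cs w a = a := by
    rw [ha, map_sum]
    simp only [← geo_mul, ← pow_succ']
    have h1 := Finset.sum_range_succ' (fun k => geo cs (w ^ k) y) N
    rw [Finset.sum_range_succ, hN, pow_orderOf_eq_one, pow_zero] at h1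
    exact (add_right_cancel h1).symm
  have hfixk (k : ℕ) : geo cs (w ^ k) a = a := by
    induction k with
    | zero => simp
    | succ k ih => rw [pow_succ, geo_mul, hfix, ih]
  have ha0 : a = 0 := by
    apply eq_zero_of_form_self cs
    nth_rw 2 [ha]
    rw [map_sum]
    refine Finset.sum_eq_zero fun k _ => ?_
    nth_rw 1 [← hfixk k]
    rw [form_geo]
    exact h a hfix
  have hsum : ∑ k ∈ Finset.range N, (y - geo cs (w ^ k) y) = (N : ℝ) • y := by
    rw [Finset.sum_sub_distrib, ← ha, ha0, sub_zero, Finset.sum_const, Finset.card_range]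
    exact (Nat.cast_smul_eq_nsmul ℝ N y).symm
  have hmem : (N : ℝ) • y ∈ mv cs w := by
    rw [← hsum]
    exact sum_mem fun k _ => pow_sub_mem_mv cs w y k
  exact (Submodule.smul_mem_iff _ (by positivity)).1 hmem

variable {cs}

/-- Multiplying by a reflection whose root is moved removes exactly that direction. -/
lemma RootOf.mv_step (h : RootOf cs t β) {g : W} (hg : β ∈ mv cs g) :
    β ∉ mv cs (t * g) ∧ mv cs g = Submodule.span ℝ {β} ⊔ mv cs (t * g) := by
  have hpos := form_self_pos cs h.ne_zero
  refine ⟨fun hcon => ?_, le_antisymm ?_ (sup_le ?_ ?_)⟩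
  · obtain ⟨x, hx⟩ := (mem_mv cs).1 hg
    have hgx : geo cs g x = x - β := by rw [← hx]; module
    have hform : 2 * form cs x β = form cs β β := by
      have := form_geo cs g x x
      rw [hgx] at this
      simp only [map_sub, LinearMap.sub_apply, form_comm cs β x] at this
      linarith
    have hfix : geo cs (t * g) x = x := by
      rw [geo_mul, hgx, map_sub, h.apply_self, h.apply, hform, div_self hpos.ne']
      module
    have := form_eq_zero_of_mem_mv cs hfix hcon
    linarith
  · rintro _ ⟨x, rfl⟩
    have h1 : (1 - geo cs g) x =
        (-(2 * form cs (geo cs g x) β / form cs β β)) • β + (x - geo cs (t * g) x) := by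
      rw [geo_mul, h.apply]
      simp only [LinearMap.sub_apply, Module.End.one_apply]
      module
    rw [h1]
    exact Submodule.add_mem_sup (Submodule.smul_mem _ _ (Submodule.mem_span_singleton_self β))
      (sub_mem_mv cs _ _)
  · rwa [Submodule.span_singleton_le_iff_mem]
  · rintro _ ⟨x, rfl⟩
    have h1 : (1 - geo cs (t * g)) x =
        (2 * form cs (geo cs g x) β / form cs β β) • β + (x - geo cs g x) := by
      rw [LinearMap.sub_apply, geo_mul, h.apply]
      simp only [Module.End.one_apply]
      module
    rw [h1]
    exact add_mem (Submodule.smul_mem _ _ hg) (sub_mem_mv cs _ _)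

lemma RootOf.mem_mv_mul (h : RootOf cs t β) {g : W} (hg : β ∉ mv cs g) :
    β ∈ mv cs (t * g) := by
  have hpos := form_self_pos cs h.ne_zero
  have : ¬ ∀ x, geo cs g x = x → form cs x β = 0 := fun h => hg (mem_mv_of_perp cs h)
  push Not at this
  obtain ⟨x, hx, hxb⟩ := this
  have h1 := sub_mem_mv cs (t * g) x
  rw [geo_mul, hx, h.apply, sub_sub_cancel] at h1
  exact (Submodule.smul_mem_iff _ (div_ne_zero (mul_ne_zero two_ne_zero hxb) hpos.ne')).1 h1

lemma finrank_span_sup {U : Submodule ℝ (B → ℝ)} {a : B → ℝ} (ha : a ∉ U) :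
    Module.finrank ℝ (Submodule.span ℝ {a} ⊔ U : Submodule ℝ (B → ℝ)) =
      Module.finrank ℝ U + 1 := by
  have ha0 : a ≠ 0 := by
    rintro rfl
    exact ha (zero_mem _)
  have h := Submodule.finrank_sup_add_finrank_inf_eq (Submodule.span ℝ {a}) U
  have hd : Submodule.span ℝ {a} ⊓ U = ⊥ := by
    rw [eq_bot_iff]
    rintro x ⟨hx, hxU⟩
    obtain ⟨c, rfl⟩ := Submodule.mem_span_singleton.1 hx
    by_cases hc : c = 0
    · simp [hc]
    · exact absurd ((Submodule.smul_mem_iff _ hc).1 hxU) ha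
  rw [hd, finrank_bot, finrank_span_singleton ha0] at h
  omega

lemma RootOf.finrank_mv (h : RootOf cs t β) {g : W} (hg : β ∈ mv cs g) :
    Module.finrank ℝ (mv cs g) = Module.finrank ℝ (mv cs (t * g)) + 1 := by
  obtain ⟨h1, h2⟩ := h.mv_step hg
  rw [h2, finrank_span_sup h1]

variable (cs)

/-- A point off all root hyperplanes has trivial stabiliser, so a nontrivial element moves
some root. -/
lemma exists_root_mem_mv {w : W} (hw : w ≠ 1) : ∃ t β, RootOf cs t β ∧ β ∈ mv cs w := by
  by_contra! hcon
  have hR : Finite {β | ∃ t, RootOf cs t β} := finite_roots cs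
  let F : Submodule ℝ (B → ℝ) := LinearMap.ker (1 - geo cs w)
  have hF (x : B → ℝ) : x ∈ F ↔ geo cs w x = x := by
    rw [LinearMap.mem_ker, LinearMap.sub_apply, Module.End.one_apply, sub_eq_zero, eq_comm]
  obtain ⟨⟨x, hxF⟩, hx⟩ := Module.Dual.exists_forall_ne_zero_of_forall_exists (K := ℝ)
    (fun β : {β | ∃ t, RootOf cs t β} => ((form cs).flip β.1).domRestrict F) (by
      rintro ⟨β, t, hβ⟩
      by_contra! h
      exact hcon t β hβ (mem_mv_of_perp cs fun x hx => h ⟨x, (hF x).2 hx⟩))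
  rw [hF] at hxF
  obtain ⟨g, -, hg⟩ := Finset.exists_max_image (Finset.univ : Finset W)
    (fun g => ∑ b, geo cs g x b) ⟨1, Finset.mem_univ _⟩
  have hdom (s : B) : 0 < form cs (geo cs g x) (sroot s) := by
    have hne : form cs (geo cs g x) (sroot s) ≠ 0 := by
      rw [form_geo_left]
      exact hx ⟨_, _, (rootOf_simple s).conj g⁻¹⟩
    have h1 := hg (cs.simple s * g) (Finset.mem_univ _)
    have hpos := form_self_pos cs (sroot_ne_zero s)
    simp only [geo_mul, (rootOf_simple (cs := cs) s).apply, Pi.sub_apply, Pi.smul_apply,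
      Finset.sum_sub_distrib, smul_eq_mul, ← Finset.mul_sum] at h1
    have h2 : ∑ b, sroot s b = 1 := by simp [sroot]
    rw [h2, mul_one, sub_le_self_iff, le_div_iff₀ hpos, zero_mul] at h1
    exact lt_of_le_of_ne (by linarith) hne.symm
  have hw' : g * w * g⁻¹ ≠ 1 := fun h => hw (by
    rw [mul_inv_eq_one] at h
    exact mul_eq_left.1 h)
  obtain ⟨s, hs⟩ := cs.exists_rightDescent_of_ne_one hw'
  have h1 : form cs (geo cs g x) (geo cs (g * w * g⁻¹) (sroot s)) =
      form cs (geo cs g x) (sroot s) := by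
    nth_rw 2 [← form_geo cs (g * w * g⁻¹)]
    rw [geo_mul cs _ _ (geo cs g x), geo_inv_geo, geo_mul cs _ _ x, hxF]
  have h2 : form cs (geo cs g x) (geo cs (g * w * g⁻¹) (sroot s)) ≤ 0 := by
    set y := geo cs (g * w * g⁻¹) (sroot s) with hy
    have : y = ∑ b, y b • sroot b := by
      ext b
      simp [sroot, Finset.sum_apply, Pi.single_apply]
    rw [this, map_sum]
    refine Finset.sum_nonpos fun b _ => ?_
    rw [map_smul, smul_eq_mul]
    exact mul_nonpos_of_nonpos_of_nonneg (geo_sroot_nonpos cs _ s hs b) (hdom b).le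
  linarith [hdom s]

lemma exists_list_of_mv (w : W) : ∃ l : List W, (∀ t ∈ l, cs.IsReflection t) ∧
    l.length = Module.finrank ℝ (mv cs w) ∧ l.prod = w := by
  induction hn : Module.finrank ℝ (mv cs w) using Nat.strong_induction_on generalizing w with
  | _ n ih =>
  by_cases hw : w = 1
  · subst hw
    exact ⟨[], by simp, by rw [← hn, finrank_mv_one]; rfl, by simp⟩
  obtain ⟨t, β, h, hβ⟩ := exists_root_mem_mv cs hw
  have h1 := h.finrank_mv hβ
  obtain ⟨l, hl1, hl2, hl3⟩ := ih _ (by omega) (t * w) rfl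
  refine ⟨t :: l, ?_, ?_, ?_⟩
  · simpa using ⟨h.isReflection, hl1⟩
  · simp; omega
  · rw [List.prod_cons, hl3, ← mul_assoc, h.mul_self, one_mul]

lemma finrank_mv_le_length (l : List W) (hl : ∀ t ∈ l, cs.IsReflection t) :
    Module.finrank ℝ (mv cs l.prod) ≤ l.length := by
  induction l with
  | nil => exact (finrank_mv_one cs).le
  | cons t l ih =>
    have ih' := ih fun s hs => hl s (List.mem_cons_of_mem _ hs)
    obtain ⟨β, hβ⟩ := exists_rootOf (hl t List.mem_cons_self)
    rw [List.prod_cons, List.length_cons]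
    by_cases h : β ∈ mv cs l.prod
    · have := hβ.finrank_mv h
      omega
    · have := hβ.finrank_mv (hβ.mem_mv_mul h)
      rw [← mul_assoc, hβ.mul_self, one_mul] at this
      omega

/-- Carter's lemma: the reflection length is the dimension of the moved space. -/
lemma rlen_eq (w : W) : rlen cs w = Module.finrank ℝ (mv cs w) := by
  refine le_antisymm (Nat.sInf_le (exists_list_of_mv cs w)) ?_
  refine le_csInf ⟨_, exists_list_of_mv cs w⟩ ?_
  rintro k ⟨l, hl, rfl, rfl⟩
  exact finrank_mv_le_length cs l hl

end Form

end NonCrossing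


/-! ### The reflection order -/

namespace NonCrossing

section Order

variable [Fintype B] [Fintype W] (cs : CoxeterSystem M W)

lemma rlen_one : rlen cs (1 : W) = 0 := by
  classical
  rw [rlen_eq, finrank_mv_one]

lemma eq_one_of_rlen {w : W} (h : rlen cs w = 0) : w = 1 := by
  classical
  obtain ⟨l, -, hl, rfl⟩ := exists_list_of_mv cs w
  rw [← rlen_eq, h, List.length_eq_zero_iff] at hl
  simp [hl]

lemma rlen_mul_le (u v : W) : rlen cs (u * v) ≤ rlen cs u + rlen cs v := by
  classical
  simp only [rlen_eq]
  exact (Submodule.finrank_mono (mv_mul_le cs u v)).trans (Submodule.finrank_add_le_finrank_add_finrank _ _)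

lemma rlen_inv (u : W) : rlen cs u⁻¹ = rlen cs u := by
  classical
  rw [rlen_eq, rlen_eq, mv_inv]

lemma rlen_conj (g u : W) : rlen cs (g * u * g⁻¹) = rlen cs u := by
  classical
  rw [rlen_eq, rlen_eq, mv_conj]
  exact (LinearEquiv.finrank_eq (Submodule.equivMapOfInjective _ (geo_injective cs g) _)).symm

variable {cs}

lemma rle_refl (u : W) : rle cs u u := by simp [rle, rlen_one]

lemma one_rle (u : W) : rle cs 1 u := by simp [rle, rlen_one]

lemma rle_of_le {u w : W} (h : rlen cs u + rlen cs (u⁻¹ * w) ≤ rlen cs w) : rle cs u w := by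
  refine le_antisymm ?_ h
  simpa using rlen_mul_le cs u (u⁻¹ * w)

lemma _root_.rle.trans {u v w : W} (h1 : rle cs u v) (h2 : rle cs v w) : rle cs u w := by
  apply rle_of_le
  have := rlen_mul_le cs (u⁻¹ * v) (v⁻¹ * w)
  rw [show u⁻¹ * v * (v⁻¹ * w) = u⁻¹ * w by group] at this
  unfold rle at *
  omega

lemma _root_.rle.antisymm {u v : W} (h1 : rle cs u v) (h2 : rle cs v u) : u = v := by
  have : rlen cs (u⁻¹ * v) = 0 := by unfold rle at *; omega
  exact inv_mul_eq_one.1 (eq_one_of_rlen cs this)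

lemma _root_.rle.conj {u v : W} (h : rle cs u v) (g : W) : rle cs (g * u * g⁻¹) (g * v * g⁻¹) := by
  rw [rle, show (g * u * g⁻¹)⁻¹ * (g * v * g⁻¹) = g * (u⁻¹ * v) * g⁻¹ by group, rlen_conj,
    rlen_conj, rlen_conj]
  exact h

lemma _root_.rle.inv_mul {u w : W} (h : rle cs u w) : rle cs (u⁻¹ * w) w := by
  have := rlen_conj cs w⁻¹ u
  rw [rle, show (u⁻¹ * w)⁻¹ * w = w⁻¹ * u * w⁻¹⁻¹ by group, this]
  unfold rle at h
  omega

lemma _root_.rle.mul_inv {u w : W} (h : rle cs u w) : rle cs (w * u⁻¹) w := by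
  have := rlen_conj cs u⁻¹ (w * u⁻¹)
  rw [show u⁻¹ * (w * u⁻¹) * u⁻¹⁻¹ = u⁻¹ * w by group] at this
  rw [rle, show (w * u⁻¹)⁻¹ * w = u by group, ← this]
  unfold rle at h
  omega

lemma _root_.rle.cancel {u v w : W} (h1 : rle cs u v) (h2 : rle cs v w) :
    rle cs (u⁻¹ * v) (u⁻¹ * w) := by
  have h3 := h1.trans h2
  rw [rle, show (u⁻¹ * v)⁻¹ * (u⁻¹ * w) = v⁻¹ * w by group]
  unfold rle at *
  omega

lemma _root_.rle.mul {u z w : W} (h1 : rle cs u w) (h2 : rle cs z (u⁻¹ * w)) :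
    rle cs u (u * z) ∧ rle cs (u * z) w := by
  have e1 := rlen_mul_le cs u z
  have e2 := rlen_mul_le cs (u * z) ((u * z)⁻¹ * w)
  rw [mul_inv_cancel_left] at e2
  unfold rle at *
  rw [inv_mul_cancel_left]
  rw [show z⁻¹ * (u⁻¹ * w) = (u * z)⁻¹ * w by group] at h2
  omega

end Order

section Moved

variable [Fintype B] [DecidableEq B] [Fintype W] {cs : CoxeterSystem M W}

lemma _root_.rle.mv_eq {u w : W} (h : rle cs u w) : mv cs w = mv cs u ⊔ mv cs (u⁻¹ * w) := by
  have h1 := mv_mul_le cs u (u⁻¹ * w)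
  rw [mul_inv_cancel_left] at h1
  refine Submodule.eq_of_le_of_finrank_le h1 ?_
  rw [rle, rlen_eq, rlen_eq, rlen_eq] at h
  rw [h]
  exact Submodule.finrank_add_le_finrank_add_finrank _ _

lemma _root_.rle.mv_le {u w : W} (h : rle cs u w) : mv cs u ≤ mv cs w := by
  rw [h.mv_eq]
  exact le_sup_left

variable {t : W} {β : B → ℝ}

lemma RootOf.rlen (h : RootOf cs t β) : rlen cs t = 1 := by
  have h1 : β ∉ mv cs (1 : W) := by
    rw [mv_one]
    exact h.ne_zero
  have h2 := h.finrank_mv (h.mem_mv_mul h1)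
  rw [mul_one, h.mul_self, finrank_mv_one] at h2
  rw [rlen_eq, h2]

lemma RootOf.rlen_mul (h : RootOf cs t β) {u : W} (hu : β ∈ mv cs u) :
    _root_.rlen cs u = _root_.rlen cs (t * u) + 1 := by
  rw [rlen_eq, rlen_eq, h.finrank_mv hu]

lemma RootOf.rle (h : RootOf cs t β) {u : W} (hu : β ∈ mv cs u) : rle cs t u := by
  have h1 := h.rlen_mul hu
  have h2 := h.rlen
  rw [_root_.rle, h.inv]
  omega

lemma RootOf.rle_mul (h : RootOf cs t β) {u w : W} (hu : β ∈ mv cs u) (hw : _root_.rle cs u w) :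
    _root_.rle cs (t * u) (t * w) := by
  have := (h.rle hu).cancel hw
  rwa [h.inv] at this

/-- The moved space of `t u` inside `u ≤ w` is cut out by the moved space of `t w`. -/
lemma RootOf.mv_inf (h : RootOf cs t β) {u w : W} (hu : β ∈ mv cs u) (hw : _root_.rle cs u w) :
    mv cs (t * u) = mv cs u ⊓ mv cs (t * w) := by
  have h1 := (h.rle_mul hu hw).mv_le
  obtain ⟨h2, h3⟩ := h.mv_step hu
  obtain ⟨h4, -⟩ := h.mv_step (hw.mv_le hu)
  have h5 : mv cs (t * u) ≤ mv cs u := by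
    rw [h3]
    exact le_sup_right
  refine Submodule.eq_of_le_of_finrank_le (le_inf h5 h1) ?_
  have h6 : mv cs u ⊓ mv cs (t * w) < mv cs u :=
    lt_of_le_of_ne inf_le_left fun h => h4 (by
      rw [← h] at hu
      exact hu.2)
  have h7 := Submodule.finrank_lt_finrank_of_lt h6
  have := h.finrank_mv hu
  omega

/-- Below a common `γ`, the order is inclusion of moved spaces. -/
lemma rle_of_mv_le {z u γ : W} (hz : rle cs z γ) (hu : rle cs u γ) (h : mv cs z ≤ mv cs u) :
    rle cs z u := by
  induction hn : rlen cs z using Nat.strong_induction_on generalizing z u γ with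
  | _ n ih =>
  by_cases hz1 : z = 1
  · subst hz1
    exact one_rle u
  obtain ⟨t, β, ht, hβ⟩ := exists_root_mem_mv cs hz1
  have h1 := ht.rlen_mul hβ
  have h2 := ht.rle_mul hβ hz
  have h3 := ht.rle_mul (h hβ) hu
  have h4 : mv cs (t * z) ≤ mv cs (t * u) := by
    rw [ht.mv_inf hβ hz, ht.mv_inf (h hβ) hu]
    exact inf_le_inf_right _ h
  have h5 := ih _ (by omega) h2 h3 h4 rfl
  have h6 := (ht.rle (h hβ)).mul (z := t * z) (by rwa [ht.inv])
  rw [← mul_assoc, ht.mul_self, one_mul] at h6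
  exact h6.2

variable (cs)

lemma mv_wordProd_apply (L : List B) {x : B → ℝ} (hx : x ∈ mv cs (cs.wordProd L)) {b : B}
    (hb : b ∉ L) : x b = 0 := by
  induction L generalizing x with
  | nil =>
    rw [CoxeterSystem.wordProd_nil, mv_one, Submodule.mem_bot] at hx
    simp [hx]
  | cons s L ih =>
    rw [List.mem_cons, not_or] at hb
    rw [cs.wordProd_cons] at hx
    obtain ⟨y, rfl⟩ := (mem_mv cs).1 hx
    have := ih (sub_mem_mv cs (cs.wordProd L) y) hb.2
    rw [geo_mul, geo_simple, sref_apply]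
    simp only [Pi.sub_apply, Pi.smul_apply, sroot, Pi.single_apply, hb.1] at this ⊢
    simpa using this

end Moved

end NonCrossing


/-! ### Cones of positive roots -/

namespace NonCrossing

open scoped NNReal

section Cone

variable [Fintype B] [DecidableEq B] [Fintype W] (cs : CoxeterSystem M W)

/-- The positive roots in the moved space of `u`. -/
def posRoots (u : W) : Set (B → ℝ) := {β | (∃ t, RootOf cs t β) ∧ 0 ≤ β ∧ β ∈ mv cs u}

/-- The convex cone spanned by the positive roots in the moved space of `u`. -/
noncomputable def cone (u : W) : Submodule ℝ≥0 (B → ℝ) := Submodule.span ℝ≥0 (posRoots cs u)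

lemma finite_posRoots (u : W) : (posRoots cs u).Finite :=
  (finite_roots cs).subset fun _ h => h.1

lemma nonneg_of_mem_span {S : Set (B → ℝ)} (hS : ∀ x ∈ S, 0 ≤ x) {x : B → ℝ}
    (hx : x ∈ Submodule.span ℝ≥0 S) : 0 ≤ x := by
  induction hx using Submodule.span_induction with
  | mem x h => exact hS x h
  | zero => exact le_rfl
  | add x y _ _ h1 h2 => exact add_nonneg h1 h2
  | smul c x _ h => exact smul_nonneg c.2 h

variable {cs}

lemma nonneg_of_mem_cone {u : W} {x : B → ℝ} (hx : x ∈ cone cs u) : 0 ≤ x :=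
  nonneg_of_mem_span (fun _ h => h.2.1) hx

lemma mem_mv_of_mem_cone {u : W} {x : B → ℝ} (hx : x ∈ cone cs u) : x ∈ mv cs u := by
  induction hx using Submodule.span_induction with
  | mem x h => exact h.2.2
  | zero => exact zero_mem _
  | add x y _ _ h1 h2 => exact add_mem h1 h2
  | smul c x _ h => exact Submodule.smul_mem _ (c : ℝ) h

lemma cone_mono {u w : W} (h : mv cs u ≤ mv cs w) : cone cs u ≤ cone cs w :=
  Submodule.span_mono fun _ hx => ⟨hx.1, hx.2.1, h hx.2.2⟩

variable (cs)

/-- Moved spaces are spanned by roots. -/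
lemma span_posRoots (u : W) : mv cs u ≤ Submodule.span ℝ (posRoots cs u) := by
  induction hn : rlen cs u using Nat.strong_induction_on generalizing u with
  | _ n ih =>
  by_cases hu : u = 1
  · rw [hu, mv_one]
    exact bot_le
  obtain ⟨t, β, ht, hβ⟩ := exists_root_mem_mv cs hu
  have h1 := ht.rlen_mul hβ
  have h2 := (ht.mv_step hβ).2
  have h3 : mv cs (t * u) ≤ mv cs u := by
    rw [h2]
    exact le_sup_right
  rw [h2]
  refine sup_le ?_ ((ih _ (by omega) _ rfl).trans
    (Submodule.span_mono fun x hx => ⟨hx.1, hx.2.1, h3 hx.2.2⟩))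
  rw [Submodule.span_singleton_le_iff_mem]
  rcases ht.nonneg_or_nonpos with h | h
  · exact Submodule.subset_span ⟨⟨t, ht⟩, h, hβ⟩
  · rw [← neg_neg β]
    exact neg_mem (Submodule.subset_span ⟨⟨t, ht.neg⟩, neg_nonneg.2 h, neg_mem hβ⟩)

/-- The positive roots in a moved space have a simple system: a linearly independent subset
generating the cone. It is a generating subset of least cardinality. -/
lemma exists_simple_system (u : W) : ∃ Δ : Set (B → ℝ), Δ ⊆ posRoots cs u ∧
    posRoots cs u ⊆ Submodule.span ℝ≥0 Δ ∧ LinearIndepOn ℝ id Δ := by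
  classical
  let good : Finset (Finset (B → ℝ)) := (finite_posRoots cs u).toFinset.powerset.filter
    fun Δ => posRoots cs u ⊆ Submodule.span ℝ≥0 (Δ : Set (B → ℝ))
  obtain ⟨Δ, hΔ, hmin⟩ := good.exists_min_image Finset.card ⟨(finite_posRoots cs u).toFinset, by
    simp [good]⟩
  simp only [good, Finset.mem_filter, Finset.mem_powerset] at hΔ hmin
  obtain ⟨hΔ1, hΔ2⟩ := hΔ
  have hsub : (Δ : Set (B → ℝ)) ⊆ posRoots cs u := fun x hx => by
    simpa using hΔ1 hx
  have hirr (δ : B → ℝ) (hδ : δ ∈ Δ) : δ ∉ Submodule.span ℝ≥0 ((Δ.erase δ : Finset _) : Set (B → ℝ)) := by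
    intro h
    have hle : Submodule.span ℝ≥0 (Δ : Set (B → ℝ)) ≤
        Submodule.span ℝ≥0 ((Δ.erase δ : Finset _) : Set (B → ℝ)) := by
      rw [Submodule.span_le]
      intro x hx
      by_cases hxδ : x = δ
      · rw [hxδ]
        exact h
      · exact Submodule.subset_span (by simpa [hxδ] using hx)
    have := hmin (Δ.erase δ) ⟨(Finset.erase_subset _ _).trans hΔ1, hΔ2.trans hle⟩
    have := Finset.card_erase_lt_of_mem hδ
    omega
  -- No positive multiple of `δ` is a sum of a multiple of `δ` and a nonzero element generated
  -- by the others.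
  have hkey (δ : B → ℝ) (hδ : δ ∈ Δ) (v : B → ℝ)
      (hv : v ∈ Submodule.span ℝ≥0 ((Δ.erase δ : Finset _) : Set (B → ℝ))) (hv0 : v ≠ 0)
      (c : ℝ) (a : ℝ≥0) (h : c • δ = a • δ + v) : False := by
    have hvn : 0 ≤ v := nonneg_of_mem_span (fun x hx => (hsub (Finset.mem_of_mem_erase hx)).2.1) hv
    have hδn : 0 ≤ δ := (hsub hδ).2.1
    have h' : v = (c - a) • δ := by
      rw [sub_smul, h, NNReal.smul_def]
      module
    rcases le_or_gt c a with hca | hca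
    · apply hv0
      refine le_antisymm ?_ hvn
      rw [h']
      exact smul_nonpos_of_nonpos_of_nonneg (by linarith) hδn
    · apply hirr δ hδ
      have hd : 0 ≤ (c - a)⁻¹ := inv_nonneg.2 (by linarith)
      have h2 := Submodule.smul_mem _ (Real.toNNReal (c - a)⁻¹) hv
      rwa [NNReal.smul_def, Real.coe_toNNReal _ hd, h', smul_smul,
        inv_mul_cancel₀ (by linarith), one_smul] at h2
  have hsplit (δ : B → ℝ) (hδ : δ ∈ Δ) (x : B → ℝ) (hx : x ∈ posRoots cs u) : ∃ a : ℝ≥0, ∃ z ∈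
      Submodule.span ℝ≥0 ((Δ.erase δ : Finset _) : Set (B → ℝ)), x = a • δ + z := by
    rw [← Submodule.mem_span_insert, ← Finset.coe_insert, Finset.insert_erase hδ]
    exact hΔ2 hx
  have hadd (δ : B → ℝ) (hδ : δ ∈ posRoots cs u) (z : B → ℝ) (hz : 0 ≤ z) (c : ℝ≥0) (hc : 0 < c) :
      c • δ + z ≠ 0 := by
    obtain ⟨⟨t, ht⟩, hδ0, -⟩ := hδ
    intro h
    have h1 : 0 ≤ c • δ := smul_nonneg c.2 hδ0
    have h2 := (add_eq_zero_iff_of_nonneg h1 hz).1 h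
    rcases smul_eq_zero.1 h2.1 with h3 | h3
    · exact hc.ne' h3
    · exact ht.ne_zero h3
  have hobt (δ : B → ℝ) (hδ : δ ∈ Δ) (ε : B → ℝ) (hε : ε ∈ Δ) (hne : δ ≠ ε) :
      form cs δ ε ≤ 0 := by
    by_contra! hpos
    obtain ⟨⟨t, ht⟩, hδ0, hδu⟩ := hsub hδ
    obtain ⟨⟨r, hr⟩, hε0, hεu⟩ := hsub hε
    have hnorm := form_self_pos cs ht.ne_zero
    have hcc : 0 < 2 * form cs ε δ / form cs δ δ := by
      rw [form_comm cs ε]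
      positivity
    set c : ℝ≥0 := ⟨_, hcc.le⟩ with hcdef
    have hc : 0 < c := hcc
    have hσ := hr.conj t
    have hσe : geo cs t ε = ε - (c : ℝ) • δ := ht.apply ε
    have hσu : geo cs t ε ∈ mv cs u := by
      rw [hσe]
      exact sub_mem hεu (Submodule.smul_mem _ _ hδu)
    have hz0 (x : B → ℝ) {z : B → ℝ}
        (hz : z ∈ Submodule.span ℝ≥0 ((Δ.erase x : Finset _) : Set (B → ℝ))) : 0 ≤ z :=
      nonneg_of_mem_span (fun y hy => (hsub (Finset.mem_of_mem_erase hy)).2.1) hz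
    rcases hσ.nonneg_or_nonpos with h | h
    · obtain ⟨a, z, hz, he⟩ := hsplit ε hε _ ⟨⟨_, hσ⟩, h, hσu⟩
      refine hkey ε hε (c • δ + z) (add_mem (Submodule.smul_mem _ _ (Submodule.subset_span ?_)) hz)
        (hadd δ (hsub hδ) z (hz0 ε hz) c hc) 1 a ?_
      · exact Finset.mem_coe.2 (Finset.mem_erase.2 ⟨hne, hδ⟩)
      · rw [hσe] at he
        simp only [NNReal.smul_def] at he ⊢
        rw [one_smul]
        linear_combination he
    · obtain ⟨a, z, hz, he⟩ := hsplit δ hδ _ ⟨⟨_, hσ.neg⟩, neg_nonneg.2 h, neg_mem hσu⟩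
      refine hkey δ hδ (ε + z) (add_mem (Submodule.subset_span ?_) hz) ?_ c a ?_
      · exact Finset.mem_coe.2 (Finset.mem_erase.2 ⟨hne.symm, hε⟩)
      · have := hadd ε (hsub hε) z (hz0 δ hz) 1 one_pos
        rwa [one_smul] at this
      · rw [hσe] at he
        simp only [NNReal.smul_def] at he ⊢
        linear_combination he
  refine ⟨Δ, hsub, hΔ2, ?_⟩
  refine LinearMap.BilinForm.linearIndependent_of_pairwise_le_zero (form cs) ?_
    (∑ b, LinearMap.proj b) _ ?_ ?_
  · intro x hx
    exact form_self_pos cs hx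
  · rintro ⟨δ, hδ⟩
    obtain ⟨⟨t, ht⟩, hδ0, -⟩ := hsub hδ
    simp only [LinearMap.sum_apply, LinearMap.proj_apply, id]
    obtain ⟨b, hb⟩ := Function.ne_iff.1 ht.ne_zero
    exact Finset.sum_pos' (fun i _ => hδ0 i) ⟨b, Finset.mem_univ _, lt_of_le_of_ne (hδ0 b) hb.symm⟩
  · rintro ⟨δ, hδ⟩ ⟨ε, hε⟩ hne
    exact hobt δ hδ ε hε fun h => hne (Subtype.ext h)

variable {cs}

/-- If `αₛ` is moved by `u` and all vectors moved by `s u` have vanishing `s`-coordinate, the cone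
of `u` is the join of the ray of `αₛ` with the cone of `s u`. -/
lemma sub_mem_cone {s : B} {u : W} (hs : sroot s ∈ mv cs u)
    (h0 : ∀ x ∈ mv cs (cs.simple s * u), x s = 0) {x : B → ℝ} (hx : x ∈ cone cs u) :
    x - x s • sroot s ∈ cone cs (cs.simple s * u) := by
  obtain ⟨Δ, hΔ1, hΔ2, hΔ3⟩ := exists_simple_system cs u
  have hstep := ((rootOf_simple (cs := cs) s).mv_step hs).2
  have hle : mv cs (cs.simple s * u) ≤ mv cs u := by
    rw [hstep]
    exact le_sup_right
  have hss : sroot s s = 1 := by simp [sroot]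
  -- A multiple of `αₛ` occurs in the simple system.
  obtain ⟨δ₁, hδ₁, l, hl, hδ₁s⟩ : ∃ δ ∈ Δ, ∃ l : ℝ, l ≠ 0 ∧ δ = l • sroot s := by
    by_contra! hcon
    have hpos : sroot s ∈ Submodule.span ℝ≥0 Δ := hΔ2 ⟨⟨_, rootOf_simple s⟩, by
      intro b
      by_cases h : b = s <;> simp [sroot, h], hs⟩
    have key (x : B → ℝ) (hx : x ∈ Submodule.span ℝ≥0 Δ) :
        0 ≤ x ∧ ((∀ b, b ≠ s → x b = 0) → x = 0) := by
      induction hx using Submodule.span_induction with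
      | mem x h =>
        obtain ⟨⟨t, ht⟩, hx0, -⟩ := hΔ1 h
        refine ⟨hx0, fun hb => ?_⟩
        have : x = x s • sroot s := by
          ext b
          by_cases h : b = s
          · simp [h, hss]
          · simp [hb b h, sroot, h]
        by_cases hxs : x s = 0
        · rw [this, hxs, zero_smul]
        · exact absurd this (hcon x h _ hxs)
      | zero => exact ⟨le_rfl, fun _ => rfl⟩
      | add x y _ _ hx hy =>
        refine ⟨add_nonneg hx.1 hy.1, fun hb => ?_⟩
        have h1 (b : B) (hbs : b ≠ s) := (add_eq_zero_iff_of_nonneg (hx.1 b) (hy.1 b)).1 (hb b hbs)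
        rw [hx.2 fun b hbs => (h1 b hbs).1, hy.2 fun b hbs => (h1 b hbs).2, add_zero]
      | smul c x _ hx =>
        refine ⟨smul_nonneg c.2 hx.1, fun hb => ?_⟩
        by_cases hc : c = 0
        · rw [hc, zero_smul]
        · rw [hx.2 fun b hbs => ?_, smul_zero]
          have := hb b hbs
          rw [Pi.smul_apply, smul_eq_zero] at this
          exact this.resolve_left hc
    refine sroot_ne_zero s ((key _ hpos).2 fun b hb => ?_)
    simp [sroot, hb]
  have hmem0 (y : B → ℝ) (hy : y ∈ mv cs u) (hys : y s = 0) : y ∈ mv cs (cs.simple s * u) := by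
    rw [hstep] at hy
    obtain ⟨a, ha, z, hz, rfl⟩ := Submodule.mem_sup.1 hy
    obtain ⟨c, rfl⟩ := Submodule.mem_span_singleton.1 ha
    have hc : c = 0 := by simpa [hss, h0 z hz] using hys
    simpa [hc] using hz
  set Δ₀ := {δ ∈ Δ | δ s = 0} with hΔ₀
  have hspan : mv cs (cs.simple s * u) ≤ Submodule.span ℝ Δ₀ := by
    refine (span_posRoots cs _).trans (Submodule.span_le.2 fun ρ hρ => ?_)
    have key (x : B → ℝ) (hx : x ∈ Submodule.span ℝ≥0 Δ) :
        0 ≤ x s ∧ (x s = 0 → x ∈ Submodule.span ℝ Δ₀) := by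
      induction hx using Submodule.span_induction with
      | mem x h => exact ⟨(hΔ1 h).2.1 s, fun h1 => Submodule.subset_span ⟨h, h1⟩⟩
      | zero => exact ⟨le_rfl, fun _ => zero_mem _⟩
      | add x y _ _ hx hy =>
        refine ⟨add_nonneg hx.1 hy.1, fun h => ?_⟩
        have h1 := (add_eq_zero_iff_of_nonneg hx.1 hy.1).1 h
        exact add_mem (hx.2 h1.1) (hy.2 h1.2)
      | smul c x _ hx =>
        refine ⟨mul_nonneg c.2 hx.1, fun h => ?_⟩
        by_cases hc : c = 0
        · rw [hc, zero_smul]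
          exact zero_mem _
        · rw [Pi.smul_apply, smul_eq_zero] at h
          exact Submodule.smul_mem _ (c : ℝ) (hx.2 (h.resolve_left hc))
    exact (key ρ (hΔ2 ⟨hρ.1, hρ.2.1, hle hρ.2.2⟩)).2 (h0 ρ hρ.2.2)
  have hdich (δ : B → ℝ) (hδ : δ ∈ Δ) : δ = δ₁ ∨ δ ∈ Δ₀ := by
    by_contra! hcon
    have h1 : δ ∈ Submodule.span ℝ (Δ \ {δ}) := by
      have h2 := (hΔ1 hδ).2.2
      rw [hstep] at h2
      have h3 : Δ₀ ⊆ Δ \ {δ} := fun y hy => ⟨hy.1, by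
        rintro rfl
        exact hcon.2 hy⟩
      refine (sup_le ?_ (hspan.trans (Submodule.span_mono h3)) :
        Submodule.span ℝ {sroot s} ⊔ mv cs (cs.simple s * u) ≤ _) h2
      · rw [Submodule.span_singleton_le_iff_mem]
        have : sroot s = l⁻¹ • δ₁ := by rw [hδ₁s, smul_smul, inv_mul_cancel₀ hl, one_smul]
        rw [this]
        exact Submodule.smul_mem _ _ (Submodule.subset_span ⟨hδ₁, fun h => hcon.1 h.symm⟩)
    exact hΔ3.notMem_span hδ (by simpa using h1)
  have hxΔ : x ∈ Submodule.span ℝ≥0 Δ := (Submodule.span_le.2 hΔ2) hx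
  clear hx
  induction hxΔ using Submodule.span_induction with
  | mem δ hδ =>
    rcases hdich δ hδ with rfl | h
    · rw [hδ₁s]
      simp [hss]
    · rw [h.2, zero_smul, sub_zero]
      have := hΔ1 hδ
      exact Submodule.subset_span ⟨this.1, this.2.1, hmem0 δ this.2.2 h.2⟩
  | zero => simp
  | add x y _ _ hx hy =>
    have := add_mem hx hy
    rw [Pi.add_apply, add_smul]
    convert this using 1
    module
  | smul c x _ hx =>
    have := Submodule.smul_mem _ c hx
    rw [Pi.smul_apply]
    convert this using 1
    rw [smul_sub, smul_assoc]

end Cone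

end NonCrossing


/-! ### Common points of cones and meets -/

namespace NonCrossing

section Meet

variable [Fintype B] [DecidableEq B] [Fintype W] {cs : CoxeterSystem M W}

/-- A simple reflection `s` permutes the positive roots which are not proportional to `αₛ`. -/
lemma geo_simple_mem_cone {s : B} {u : W} (hs : sroot s ∉ mv cs u) {x : B → ℝ}
    (hx : x ∈ cone cs u) :
    geo cs (cs.simple s) x ∈ cone cs (cs.simple s * u * (cs.simple s)⁻¹) := by
  induction hx using Submodule.span_induction with
  | mem ρ h =>
    obtain ⟨⟨t, ht⟩, h0, hu⟩ := h
    have hr := ht.conj (cs.simple s)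
    refine Submodule.subset_span ⟨⟨_, hr⟩, ?_, geo_mem_mv_conj cs _ hu⟩
    refine hr.nonneg_or_nonpos.resolve_right fun hneg => ?_
    have hb (b : B) (hb : b ≠ s) : ρ b = 0 := by
      have h1 := hneg b
      rw [geo_simple, sref_apply] at h1
      simp only [sroot, Pi.sub_apply, Pi.smul_apply, Pi.single_apply, hb, if_false, smul_zero,
        sub_zero, Pi.zero_apply] at h1
      exact le_antisymm h1 (h0 b)
    have hρ : ρ = ρ s • sroot s := by
      ext b
      by_cases h : b = s
      · simp [h, sroot]
      · simp [hb b h, sroot, h]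
    rw [hρ] at hu
    refine hs ((Submodule.smul_mem_iff _ fun h1 => ht.ne_zero ?_).1 hu)
    rw [hρ, h1, zero_smul]
  | zero => rw [map_zero]; exact zero_mem _
  | add x y _ _ hx hy => rw [map_add]; exact add_mem hx hy
  | smul c x _ hx => rw [NNReal.smul_def, map_smul]; exact Submodule.smul_mem _ c hx

/-- When `αₛ` is moved by `u`, the only obstruction to reflecting a point of the cone is the sign
of its `s`-coordinate. -/
lemma geo_simple_mem_cone' {s : B} {u : W} (hs : sroot s ∈ mv cs u)
    (h0 : ∀ x ∈ mv cs (cs.simple s * u), x s = 0) {x : B → ℝ} (hx : x ∈ cone cs u)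
    (hxs : 0 ≤ geo cs (cs.simple s) x s) :
    geo cs (cs.simple s) x ∈ cone cs (cs.simple s * u * (cs.simple s)⁻¹) := by
  have hr := rootOf_simple (cs := cs) s
  have h1 := sub_mem_cone hs h0 hx
  have hle : mv cs (cs.simple s * u) ≤ mv cs u := by
    rw [(hr.mv_step hs).2]
    exact le_sup_right
  have hle2 : mv cs u ≤ mv cs (cs.simple s * u * (cs.simple s)⁻¹) := by
    intro y hy
    have h2 : geo cs (cs.simple s) y ∈ mv cs u := by
      rw [hr.apply]
      exact sub_mem hy (Submodule.smul_mem _ _ hs)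
    have h3 := geo_mem_mv_conj cs (cs.simple s) h2
    rwa [← geo_mul, cs.simple_mul_simple_self, geo_one] at h3
  have h2 := cone_mono (hle.trans hle2) h1
  have hpos : sroot s ∈ cone cs (cs.simple s * u * (cs.simple s)⁻¹) :=
    Submodule.subset_span ⟨⟨_, hr⟩, by
      intro b
      by_cases h : b = s <;> simp [sroot, h], hle2 hs⟩
  have h3 := add_mem h2 (Submodule.smul_mem _ (Real.toNNReal (geo cs (cs.simple s) x s)) hpos)
  rw [NNReal.smul_def, Real.coe_toNNReal _ hxs] at h3
  convert h3 using 1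
  rw [geo_simple, sref_apply]
  simp only [Pi.sub_apply, Pi.smul_apply, smul_eq_mul, sroot, Pi.single_eq_same]
  module

variable (cs)

/-- A counterexample to the statement that a common point of the cones of `u` and `w` is moved
by a common lower bound of `u` and `w`, for the Coxeter element of the subset `L`. -/
def Bad (L : List B) (u w : W) (x : B → ℝ) : Prop :=
  L.Nodup ∧ rle cs u (cs.wordProd L) ∧ rle cs w (cs.wordProd L) ∧ x ∈ cone cs u ∧ x ∈ cone cs w ∧
    ¬ ∃ v, rle cs v u ∧ rle cs v w ∧ x ∈ mv cs v

variable {cs}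

lemma Bad.symm {L : List B} {u w : W} {x : B → ℝ} (h : Bad cs L u w x) : Bad cs L w u x := by
  obtain ⟨h1, h2, h3, h4, h5, h6⟩ := h
  exact ⟨h1, h3, h2, h5, h4, fun ⟨v, a, b, c⟩ => h6 ⟨v, b, a, c⟩⟩

lemma coord_eq_zero {s : B} {L : List B} (h : (s :: L).Nodup) {u : W}
    (hu : rle cs u (cs.wordProd (s :: L))) (hs : sroot s ∈ mv cs u) :
    rle cs (cs.simple s * u) (cs.wordProd L) ∧ ∀ x ∈ mv cs (cs.simple s * u), x s = 0 := by
  have h1 := (rootOf_simple (cs := cs) s).rle_mul hs hu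
  rw [cs.wordProd_cons, cs.simple_mul_simple_cancel_left] at h1
  exact ⟨h1, fun x hx => mv_wordProd_apply cs L (h1.mv_le hx) (List.nodup_cons.1 h).1⟩

/-- In a counterexample with `L` minimal, the first simple root is not moved by both elements:
otherwise it could be split off, leaving a counterexample for a shorter word. -/
lemma Bad.not_both {s : B} {L : List B} {u w : W} {x : B → ℝ} (h : Bad cs (s :: L) u w x)
    (ih : ∀ u w x, ¬ Bad cs L u w x) (hu : sroot s ∈ mv cs u) : sroot s ∉ mv cs w := by
  intro hw
  obtain ⟨h1, h2, h3, h4, h5, h6⟩ := h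
  obtain ⟨hu1, hu2⟩ := coord_eq_zero h1 h2 hu
  obtain ⟨hw1, hw2⟩ := coord_eq_zero h1 h3 hw
  have hr := rootOf_simple (cs := cs) s
  refine ih (cs.simple s * u) (cs.simple s * w) (x - x s • sroot s)
    ⟨(List.nodup_cons.1 h1).2, hu1, hw1, sub_mem_cone hu hu2 h4, sub_mem_cone hw hw2 h5, ?_⟩
  rintro ⟨v, hvu, hvw, hxv⟩
  have e1 := (hr.rle hu).mul (z := v) (by rwa [hr.inv])
  have e2 := (hr.rle hw).mul (z := v) (by rwa [hr.inv])
  refine h6 ⟨cs.simple s * v, e1.2, e2.2, ?_⟩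
  have hα : sroot s ∈ mv cs (cs.simple s) := by
    have := hr.mem_mv_mul (g := 1) (by rw [mv_one]; exact hr.ne_zero)
    rwa [mul_one] at this
  have h7 : sroot s ∈ mv cs (cs.simple s * v) := e1.1.mv_le hα
  have h8 : mv cs v ≤ mv cs (cs.simple s * v) := by
    rw [e1.1.mv_eq, inv_mul_cancel_left]
    exact le_sup_right
  have := add_mem (h8 hxv) (Submodule.smul_mem _ (x s) h7)
  rwa [sub_add_cancel] at this

/-- A counterexample with `L` minimal can be conjugated by the first simple reflection. If only `w`
moves `αₛ`, the sign needed to stay in its cone is supplied by the cone of `u`, which reflects to a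
cone of positive roots. -/
lemma Bad.rotate_one {s : B} {L : List B} {u w : W} {x : B → ℝ} (h : Bad cs (s :: L) u w x)
    (ih : ∀ u w x, ¬ Bad cs L u w x) :
    Bad cs (L ++ [s]) (cs.simple s * u * (cs.simple s)⁻¹) (cs.simple s * w * (cs.simple s)⁻¹)
      (geo cs (cs.simple s) x) := by
  have hcone : geo cs (cs.simple s) x ∈ cone cs (cs.simple s * u * (cs.simple s)⁻¹) ∧
      geo cs (cs.simple s) x ∈ cone cs (cs.simple s * w * (cs.simple s)⁻¹) := by
    have key (u w : W) (h : Bad cs (s :: L) u w x) (hu : sroot s ∉ mv cs u) :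
        geo cs (cs.simple s) x ∈ cone cs (cs.simple s * u * (cs.simple s)⁻¹) ∧
        geo cs (cs.simple s) x ∈ cone cs (cs.simple s * w * (cs.simple s)⁻¹) := by
      obtain ⟨h1, h2, h3, h4, h5, -⟩ := h
      have e1 := geo_simple_mem_cone hu h4
      refine ⟨e1, ?_⟩
      by_cases hw : sroot s ∈ mv cs w
      · exact geo_simple_mem_cone' hw (coord_eq_zero h1 h3 hw).2 h5 (nonneg_of_mem_cone e1 s)
      · exact geo_simple_mem_cone hw h5
    by_cases hu : sroot s ∈ mv cs u
    · exact (key w u h.symm (h.not_both ih hu)).symm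
    · exact key u w h hu
  obtain ⟨h1, h2, h3, h4, h5, h6⟩ := h
  have hγ : cs.wordProd (L ++ [s]) = cs.simple s * cs.wordProd (s :: L) * (cs.simple s)⁻¹ := by
    simp [cs.wordProd_append, cs.wordProd_cons]
  refine ⟨?_, ?_, ?_, hcone.1, hcone.2, ?_⟩
  · exact ((List.perm_append_singleton s L).nodup_iff).2 h1
  · rw [hγ]
    exact h2.conj _
  · rw [hγ]
    exact h3.conj _
  · rintro ⟨v, hv1, hv2, hv3⟩
    have hconj (z : W) : (cs.simple s)⁻¹ * (cs.simple s * z * (cs.simple s)⁻¹) *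
        (cs.simple s)⁻¹⁻¹ = z := by group
    refine h6 ⟨(cs.simple s)⁻¹ * v * (cs.simple s)⁻¹⁻¹, ?_, ?_, ?_⟩
    · have := hv1.conj (cs.simple s)⁻¹
      rwa [hconj] at this
    · have := hv2.conj (cs.simple s)⁻¹
      rwa [hconj] at this
    · have := geo_mem_mv_conj cs (cs.simple s)⁻¹ hv3
      rwa [geo_inv_geo] at this

/-- Rotating repeatedly conjugates a minimal counterexample by any prefix of the word. -/
lemma Bad.rotate {n : ℕ} (ih : ∀ L : List B, L.length < n → ∀ u w x, ¬ Bad cs L u w x)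
    (L₁ L₂ : List B) (hn : (L₁ ++ L₂).length = n) {u w : W} {x : B → ℝ}
    (h : Bad cs (L₁ ++ L₂) u w x) :
    Bad cs (L₂ ++ L₁) ((cs.wordProd L₁)⁻¹ * u * (cs.wordProd L₁)⁻¹⁻¹)
      ((cs.wordProd L₁)⁻¹ * w * (cs.wordProd L₁)⁻¹⁻¹) (geo cs (cs.wordProd L₁)⁻¹ x) := by
  induction L₁ generalizing L₂ u w x with
  | nil => simpa [geo_one] using h
  | cons s L₁ ihL =>
    have h1 := Bad.rotate_one (L := L₁ ++ L₂) h (ih _ (by simp at hn ⊢; omega))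
    rw [List.append_assoc] at h1
    have h2 := ihL (L₂ ++ [s]) (by simp at hn ⊢; omega) h1
    rw [List.append_assoc, List.singleton_append] at h2
    have e : (cs.wordProd (s :: L₁))⁻¹ = (cs.wordProd L₁)⁻¹ * cs.simple s := by
      simp [cs.wordProd_cons]
    rw [e, geo_mul]
    convert h2 using 1 <;> group

/-- There is no counterexample: a minimal one could be conjugated by the Coxeter element `c`
indefinitely, so the `c`-orbit of `x` would consist of nonnegative vectors. Its sum is both fixed and
moved by `c`, hence zero, which forces `x = 0`. -/
lemma not_bad (L : List B) (u w : W) (x : B → ℝ) : ¬ Bad cs L u w x := by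
  induction hn : L.length using Nat.strong_induction_on generalizing L u w x with
  | _ n ih =>
  intro hbad
  set g := (cs.wordProd L)⁻¹ with hg
  -- A counterexample can be rotated forever, so the whole orbit of `x` is nonnegative.
  have hall (k : ℕ) : Bad cs L (g ^ k * u * (g ^ k)⁻¹) (g ^ k * w * (g ^ k)⁻¹)
      (geo cs (g ^ k) x) := by
    induction k with
    | zero => simpa [geo_one] using hbad
    | succ k ihk =>
      have := Bad.rotate (n := n) (fun L hL u w x => ih _ hL L u w x rfl) L [] (by simpa using hn)
        (u := g ^ k * u * (g ^ k)⁻¹) (w := g ^ k * w * (g ^ k)⁻¹) (x := geo cs (g ^ k) x)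
        (by rw [List.append_nil]; exact ihk)
      rw [List.nil_append, ← hg, ← geo_mul] at this
      rw [pow_succ']
      convert this using 1 <;> group
  obtain ⟨-, h2, -, h4, -, h6⟩ := hbad
  set a := ∑ k ∈ Finset.range (orderOf g), geo cs (g ^ k) x with ha
  have hfix : geo cs g a = a := by
    rw [ha, map_sum]
    simp only [← geo_mul, ← pow_succ']
    have h1 := Finset.sum_range_succ' (fun k => geo cs (g ^ k) x) (orderOf g)
    rw [Finset.sum_range_succ, pow_orderOf_eq_one, pow_zero] at h1
    exact (add_right_cancel h1).symm
  have hxg : x ∈ mv cs g := by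
    rw [hg, mv_inv]
    exact h2.mv_le (mem_mv_of_mem_cone h4)
  have hmem : a ∈ mv cs g := by
    refine sum_mem fun k _ => ?_
    have := sub_mem hxg (pow_sub_mem_mv cs g x k)
    rwa [sub_sub_cancel] at this
  have ha0 : a = 0 := eq_zero_of_form_self cs (form_eq_zero_of_mem_mv cs hfix hmem)
  have hx0 : x = 0 := by
    have hnn (k : ℕ) : 0 ≤ geo cs (g ^ k) x := nonneg_of_mem_cone (hall k).2.2.2.1
    have h1 := Finset.sum_eq_zero_iff_of_nonneg (s := Finset.range (orderOf g))
      (f := fun k => geo cs (g ^ k) x) (fun k _ => hnn k)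
    have h3 := h1.1 ha0 0 (Finset.mem_range.2 (orderOf_pos g))
    simpa [geo_one] using h3
  exact h6 ⟨1, one_rle u, one_rle w, by rw [hx0]; exact zero_mem _⟩

/-- The meet is an element whose moved space contains all the common positive roots of `u` and `w`.
A positive combination of these roots lies in the moved space of a common lower bound by `not_bad`;
one lower bound serves for infinitely many points of a curve which spans, hence for all roots. -/
lemma exists_meet_wordProd {L : List B} (hL : L.Nodup) {u w : W}
    (hu : rle cs u (cs.wordProd L)) (hw : rle cs w (cs.wordProd L)) :
    ∃ v, rle cs v u ∧ rle cs v w ∧ ∀ z, rle cs z u → rle cs z w → rle cs z v := by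
  have hfin : (posRoots cs u ∩ posRoots cs w).Finite :=
    (finite_posRoots cs u).subset Set.inter_subset_left
  obtain ⟨N, ρ, -, hρ⟩ := hfin.fin_param
  -- Infinitely many points of this moment curve lie in one and the same moved space.
  let x : ℕ → B → ℝ := fun n => ∑ i : Fin N, ((n : ℝ) ^ (i : ℕ)) • ρ i
  have hex (n : ℕ) : ∃ v, rle cs v u ∧ rle cs v w ∧ x n ∈ mv cs v := by
    by_contra hcon
    have hmem (i : Fin N) : ρ i ∈ posRoots cs u ∩ posRoots cs w := by
      rw [← hρ]
      exact ⟨i, rfl⟩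
    refine not_bad L u w (x n) ⟨hL, hu, hw, sum_mem fun i _ => ?_, sum_mem fun i _ => ?_, hcon⟩
    · exact Submodule.smul_mem _ ((n : NNReal) ^ (i : ℕ)) (Submodule.subset_span (hmem i).1)
    · exact Submodule.smul_mem _ ((n : NNReal) ^ (i : ℕ)) (Submodule.subset_span (hmem i).2)
  choose f hf1 hf2 hf3 using hex
  obtain ⟨v, hv⟩ := Finite.exists_infinite_fiber f
  obtain ⟨n₀, hn₀⟩ : (f ⁻¹' {v}).Nonempty := (Set.infinite_coe_iff.1 hv).nonempty
  have hn₀' : f n₀ = v := hn₀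
  have hvu : rle cs v u := hn₀' ▸ hf1 n₀
  have hvw : rle cs v w := hn₀' ▸ hf2 n₀
  have hρv (i : Fin N) : ρ i ∈ mv cs v := by
    refine mem_mv_of_perp cs fun y hy => ?_
    let p : Polynomial ℝ := ∑ i : Fin N, Polynomial.monomial (i : ℕ) (form cs y (ρ i))
    have hp : p = 0 := by
      refine Polynomial.eq_zero_of_infinite_isRoot p ?_
      refine ((Set.infinite_coe_iff.1 hv).image (f := fun n : ℕ => (n : ℝ))
        (Nat.cast_injective.injOn)).mono ?_
      rintro _ ⟨n, hn, rfl⟩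
      have hn' : f n = v := hn
      have h1 := form_eq_zero_of_mem_mv cs hy (hn' ▸ hf3 n)
      simp only [x, map_sum, map_smul, smul_eq_mul] at h1
      simp only [Set.mem_ofPred_eq, Polynomial.IsRoot.def, p, Polynomial.eval_finsetSum,
        Polynomial.eval_monomial]
      rw [← h1]
      exact Finset.sum_congr rfl fun i _ => mul_comm _ _
    have hc := congrArg (fun q => Polynomial.coeff q (i : ℕ)) hp
    simp only [p, Polynomial.finsetSum_coeff, Polynomial.coeff_monomial, Polynomial.coeff_zero,
      Fin.val_inj] at hc
    simpa using hc
  refine ⟨v, hvu, hvw, fun z hzu hzw => ?_⟩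
  refine rle_of_mv_le (hzu.trans hu) (hvu.trans hu) ?_
  refine (span_posRoots cs z).trans (Submodule.span_le.2 fun β hβ => ?_)
  have : β ∈ Set.range ρ := by
    rw [hρ]
    exact ⟨⟨hβ.1, hβ.2.1, hzu.mv_le hβ.2.2⟩, ⟨hβ.1, hβ.2.1, hzw.mv_le hβ.2.2⟩⟩
  obtain ⟨i, rfl⟩ := this
  exact hρv i

end Meet

/-- The interval below a Coxeter element is a meet semilattice. -/
lemma exists_meet [Fintype B] [Fintype W] {cs : CoxeterSystem M W} {γ : W}
    (hγ : IsCoxeterElement cs γ) {u w : W} (hu : rle cs u γ) (hw : rle cs w γ) :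
    ∃ v, rle cs v u ∧ rle cs v w ∧ ∀ z, rle cs z u → rle cs z w → rle cs z v := by
  classical
  obtain ⟨g, L, hL, -, rfl⟩ := hγ
  have hc (z : W) : g * (g⁻¹ * z * g⁻¹⁻¹) * g⁻¹ = z := by group
  have hc' : g⁻¹ * (g * cs.wordProd L * g⁻¹) * g⁻¹⁻¹ = cs.wordProd L := by group
  have hu' := hu.conj g⁻¹
  have hw' := hw.conj g⁻¹
  rw [hc'] at hu' hw'
  obtain ⟨v, h1, h2, h3⟩ := exists_meet_wordProd hL hu' hw'
  refine ⟨g * v * g⁻¹, ?_, ?_, fun z hzu hzw => ?_⟩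
  · have := h1.conj g
    rwa [hc] at this
  · have := h2.conj g
    rwa [hc] at this
  · have := (h3 _ (hzu.conj g⁻¹) (hzw.conj g⁻¹)).conj g
    rwa [hc] at this

end NonCrossing


/-! ### The Garside structure of the positive monoid -/

namespace NonCrossing

section Garside

variable [Fintype B] [Fintype W] {cs : CoxeterSystem M W} {γ : W}

lemma pgen_one : pgen cs γ 1 = 1 := by
  simp [pgen]

lemma pgen_of (w : NCGen cs γ) : pgen cs γ w = PresentedMonoid.of (posRels cs γ) w := by
  rw [pgen, dif_pos w.2]

/-- The defining relations, with the conventions `⟨1⟩ = 1` built in. -/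
lemma pgen_mul {u v : W} (h : rle cs u (u * v)) (hγ : rle cs (u * v) γ) :
    pgen cs γ u * pgen cs γ v = pgen cs γ (u * v) := by
  have hlen : rlen cs (u * v) = rlen cs u + rlen cs v := by
    have := h
    rwa [rle, inv_mul_cancel_left] at this
  have hv : rle cs v γ := by
    have := h.inv_mul.trans hγ
    rwa [inv_mul_cancel_left] at this
  by_cases hu1 : u = 1
  · rw [hu1, pgen_one, one_mul, one_mul]
  by_cases hv1 : v = 1
  · rw [hv1, pgen_one, mul_one, mul_one]
  have huv : u * v ≠ 1 := by
    intro h1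
    rw [h1, rlen_one cs] at hlen
    exact hu1 (eq_one_of_rlen cs (by omega))
  rw [pgen, pgen, pgen, dif_pos ⟨hu1, h.trans hγ⟩, dif_pos ⟨hv1, hv⟩, dif_pos ⟨huv, hγ⟩]
  exact PresentedMonoid.mk_eq_mk_of_rel
    ⟨⟨u, hu1, h.trans hγ⟩, ⟨v, hv1, hv⟩, ⟨u * v, huv, hγ⟩, rfl, rfl, rfl, hlen.symm⟩

lemma pos_induction {p : PosMonoid cs γ → Prop} (one : p 1)
    (mul : ∀ w, rle cs w γ → ∀ m, p m → p (pgen cs γ w * m)) (m : PosMonoid cs γ) : p m := by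
  have hm : m ∈ Submonoid.closure (Set.range (PresentedMonoid.of (posRels cs γ))) := by
    rw [PresentedMonoid.closure_range_of]
    trivial
  induction hm using Submonoid.closure_induction_left with
  | one => exact one
  | mul_left x hx y _ hy =>
    obtain ⟨w, rfl⟩ := hx
    rw [← pgen_of]
    exact mul _ w.2.2 _ hy

/-- The meet of two elements of `[1,γ]`. -/
noncomputable def meet (hγ : IsCoxeterElement cs γ) (u w : {w : W // rle cs w γ}) : W :=
  (exists_meet hγ u.2 w.2).choose

variable (hγ : IsCoxeterElement cs γ) (u w : {w : W // rle cs w γ})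

lemma meet_left : rle cs (meet hγ u w) u := (exists_meet hγ u.2 w.2).choose_spec.1

lemma meet_right : rle cs (meet hγ u w) w := (exists_meet hγ u.2 w.2).choose_spec.2.1

variable {u w} in
lemma le_meet {z : W} (h1 : rle cs z u) (h2 : rle cs z w) : rle cs z (meet hγ u w) :=
  (exists_meet hγ u.2 w.2).choose_spec.2.2 z h1 h2

/-- The right complement `p⁻¹γ` of `p ∈ [1,γ]`. -/
def compl (p : {w : W // rle cs w γ}) : {w : W // rle cs w γ} := ⟨(p : W)⁻¹ * γ, p.2.inv_mul⟩

lemma mul_meet (p h : {w : W // rle cs w γ}) :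
    rle cs p (p * meet hγ (compl p) h) ∧ rle cs (p * meet hγ (compl p) h) γ :=
  p.2.mul (meet_left hγ (compl p) h)

/-- Left multiplication by `⟨p⟩` on pairs `(h, m)`, thought of as the factorization `⟨h⟩ m` of an
element of the positive monoid: as much of `h` as possible is absorbed into `p`. -/
noncomputable def step (p : {w : W // rle cs w γ}) :
    Function.End ({w : W // rle cs w γ} × PosMonoid cs γ) :=
  fun x => (⟨p * meet hγ (compl p) x.1, (mul_meet hγ p x.1).2⟩,
    pgen cs γ ((meet hγ (compl p) x.1)⁻¹ * x.1) * x.2)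

lemma step_value (p : {w : W // rle cs w γ}) (x : {w : W // rle cs w γ} × PosMonoid cs γ) :
    pgen cs γ (step hγ p x).1 * (step hγ p x).2 = pgen cs γ p * (pgen cs γ x.1 * x.2) := by
  have h1 := mul_meet hγ p x.1
  have h2 := meet_right hγ (compl p) x.1
  simp only [step]
  rw [← pgen_mul h1.1 h1.2, mul_assoc, ← mul_assoc (pgen cs γ (meet hγ (compl p) x.1)),
    pgen_mul (by rwa [mul_inv_cancel_left]) (by rw [mul_inv_cancel_left]; exact x.1.2),
    mul_inv_cancel_left]

/-- The identity `p⁻¹γ ∧ q(q⁻¹γ ∧ h) = q((pq)⁻¹γ ∧ h)`, which makes `step` compatible with the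
defining relations. -/
lemma meet_mul {p q r : {w : W // rle cs w γ}} (hr : (p : W) * q = r)
    (hpr : rle cs (p : W) r) (h : {w : W // rle cs w γ}) :
    meet hγ (compl p) ⟨q * meet hγ (compl q) h, (mul_meet hγ q h).2⟩ =
      q * meet hγ (compl r) h := by
  have hqr : (p : W)⁻¹ * r = q := by rw [← hr, inv_mul_cancel_left]
  have hrγ : (r : W)⁻¹ * γ = (q : W)⁻¹ * ((p : W)⁻¹ * γ) := by rw [← hr, mul_inv_rev, mul_assoc]
  have hqp : rle cs (q : W) ((p : W)⁻¹ * γ) := hqr ▸ hpr.cancel r.2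
  have hb := mul_meet hγ q h
  set b := meet hγ (compl q) h with hbdef
  set d := meet hγ (compl r) h with hd
  set c := meet hγ (compl p) ⟨q * b, hb.2⟩ with hc
  have hd1 : rle cs d ((q : W)⁻¹ * ((p : W)⁻¹ * γ)) := hrγ ▸ meet_left hγ (compl r) h
  have hqd := hqp.mul hd1
  have hdb : rle cs d b :=
    le_meet hγ (hd1.trans (hqp.cancel p.2.inv_mul)) (meet_right hγ (compl r) h)
  refine rle.antisymm (cs := cs) ?_ ?_
  · have hqc : rle cs (q : W) c := le_meet hγ hqp hb.1
    have h1 : rle cs ((q : W)⁻¹ * c) ((q : W)⁻¹ * ((p : W)⁻¹ * γ)) :=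
      hqc.cancel (meet_left hγ (compl p) _)
    have h2 : rle cs ((q : W)⁻¹ * c) b := by
      have := hqc.cancel (meet_right hγ (compl p) ⟨q * b, hb.2⟩)
      simpa only [inv_mul_cancel_left] using this
    have h3 : rle cs ((q : W)⁻¹ * c) d :=
      le_meet hγ (by change rle cs _ ((r : W)⁻¹ * γ); rwa [hrγ]) (h2.trans (meet_right hγ (compl q) h))
    have := (hqd.1.mul (z := (q : W)⁻¹ * c) (by rwa [inv_mul_cancel_left])).2
    rwa [mul_inv_cancel_left] at this
  · refine le_meet hγ hqd.2 ?_
    exact (hb.1.mul (by rwa [inv_mul_cancel_left])).2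

lemma step_mul {p q r : {w : W // rle cs w γ}} (hr : (p : W) * q = r)
    (hpr : rle cs (p : W) r) : step hγ p * step hγ q = step hγ r := by
  funext x
  obtain ⟨h, m⟩ := x
  have hmm := meet_mul hγ hr hpr h
  have hqr : (p : W)⁻¹ * r = q := by rw [← hr, inv_mul_cancel_left]
  have hrγ : (r : W)⁻¹ * γ = (q : W)⁻¹ * ((p : W)⁻¹ * γ) := by rw [← hr, mul_inv_rev, mul_assoc]
  have hqp : rle cs (q : W) ((p : W)⁻¹ * γ) := hqr ▸ hpr.cancel r.2
  have hd1 : rle cs (meet hγ (compl r) h) ((q : W)⁻¹ * ((p : W)⁻¹ * γ)) :=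
    hrγ ▸ meet_left hγ (compl r) h
  have hdb : rle cs (meet hγ (compl r) h) (meet hγ (compl q) h) :=
    le_meet hγ (hd1.trans (hqp.cancel p.2.inv_mul)) (meet_right hγ (compl r) h)
  have hbh := meet_right hγ (compl q) h
  change step hγ p (step hγ q (h, m)) = _
  simp only [step, hmm]
  refine Prod.ext (Subtype.ext ?_) ?_
  · change (p : W) * (q * _) = r * _
    rw [← mul_assoc, hr]
  · change pgen cs γ _ * (pgen cs γ _ * m) = pgen cs γ _ * m
    have e : ((q : W) * meet hγ (compl r) h)⁻¹ * (q * meet hγ (compl q) h) =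
      (meet hγ (compl r) h)⁻¹ * meet hγ (compl q) h := by group
    have e2 : (meet hγ (compl r) h)⁻¹ * meet hγ (compl q) h * ((meet hγ (compl q) h)⁻¹ * h) =
      (meet hγ (compl r) h)⁻¹ * h := by group
    have h1 : rle cs ((meet hγ (compl r) h)⁻¹ * meet hγ (compl q) h)
        ((meet hγ (compl r) h)⁻¹ * h) := hdb.cancel hbh
    rw [e, ← mul_assoc, pgen_mul (e2 ▸ h1)
      (e2 ▸ (hdb.trans hbh).inv_mul.trans h.2), e2]

/-- The action of the positive monoid on factorizations given on generators by `step`. -/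
noncomputable def act :
    PosMonoid cs γ →* Function.End ({w : W // rle cs w γ} × PosMonoid cs γ) :=
  PresentedMonoid.lift (rels := posRels cs γ) (fun w => step hγ ⟨w.1, w.2.2⟩) (by
    rintro _ _ ⟨w₁, w₂, w₃, rfl, rfl, hmul, hlen⟩
    have := step_mul hγ (p := ⟨w₁, w₁.2.2⟩) (q := ⟨w₂, w₂.2.2⟩) (r := ⟨w₃, w₃.2.2⟩) hmul (by
      change rlen cs w₃.1 = rlen cs w₁.1 + rlen cs (w₁.1⁻¹ * w₃.1)
      rw [← hmul, inv_mul_cancel_left, hmul, hlen])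
    simpa using this)

lemma act_value (m : PosMonoid cs γ) (x : {w : W // rle cs w γ} × PosMonoid cs γ) :
    pgen cs γ (act hγ m x).1 * (act hγ m x).2 = m * (pgen cs γ x.1 * x.2) := by
  induction m using pos_induction with
  | one => rw [map_one, one_mul]; rfl
  | mul w hw m ih =>
    rw [map_mul]
    change pgen cs γ (act hγ (pgen cs γ w) (act hγ m x)).1 * (act hγ (pgen cs γ w) _).2 = _
    rw [mul_assoc, ← ih]
    by_cases h1 : w = 1
    · subst h1
      rw [pgen_one, map_one, one_mul]
      rfl
    · have : act hγ (pgen cs γ w) = step hγ ⟨w, hw⟩ := by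
        rw [pgen, dif_pos ⟨h1, hw⟩]
        rfl
      rw [this, step_value]

/-- The Garside element `⟨γ⟩` is left cancellable: acting by it turns a factorization of `m` into
the pair `(γ, m)`, from which `m` can be read off. -/
lemma gar_left_cancel (hγ : IsCoxeterElement cs γ) {m m' : PosMonoid cs γ} (h : pgen cs γ γ * m = pgen cs γ γ * m') :
    m = m' := by
  by_cases h1 : γ = 1
  · have hone : pgen cs γ γ = 1 := by
      rw [pgen, dif_neg fun h => h.1 h1]
    rwa [hone, one_mul, one_mul] at h
  have key (m : PosMonoid cs γ) :
      (act hγ (pgen cs γ γ * m) (⟨1, one_rle γ⟩, 1)).2 = m := by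
    have hact : act hγ (pgen cs γ γ) = step hγ ⟨γ, rle_refl γ⟩ := by
      rw [pgen, dif_pos ⟨h1, rle_refl γ⟩]
      rfl
    rw [map_mul, hact]
    change (step hγ ⟨γ, rle_refl γ⟩ (act hγ m (⟨1, one_rle γ⟩, 1))).2 = m
    have hv := act_value hγ m (⟨1, one_rle γ⟩, 1)
    rw [pgen_one, mul_one, mul_one] at hv
    have hm (x) : meet hγ (compl ⟨γ, rle_refl γ⟩) x = 1 := by
      refine rle.antisymm (cs := cs) ?_ (one_rle _)
      have := meet_left hγ (compl ⟨γ, rle_refl γ⟩) x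
      simpa [compl] using this
    simp only [step, hm, inv_one, one_mul]
    exact hv
  rw [← key m, h, key m']

/-- Conjugation by an element commuting with `γ`, as an endomorphism of the positive monoid. -/
noncomputable def conjHom (g : W) (hg : g * γ * g⁻¹ = γ) : PosMonoid cs γ →* PosMonoid cs γ :=
  PresentedMonoid.lift (rels := posRels cs γ) (fun w => pgen cs γ (g * w.1 * g⁻¹)) (by
    rintro _ _ ⟨w₁, w₂, w₃, rfl, rfl, hmul, hlen⟩
    have e : g * w₁.1 * g⁻¹ * (g * w₂.1 * g⁻¹) = g * w₃.1 * g⁻¹ := by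
      rw [← hmul]
      group
    have h1 : rle cs w₁.1 w₃.1 := by
      change rlen cs w₃.1 = rlen cs w₁.1 + rlen cs (w₁.1⁻¹ * w₃.1)
      rw [← hmul, inv_mul_cancel_left, hmul, hlen]
    have h2 := w₃.2.2.conj g
    rw [hg] at h2
    have := pgen_mul (γ := γ) (e.symm ▸ h1.conj g) (e.symm ▸ h2)
    rw [e] at this
    simpa using this)

lemma conjHom_pgen {g : W} (hg : g * γ * g⁻¹ = γ) {w : W} (hw : rle cs w γ) :
    conjHom g hg (pgen cs γ w) = pgen cs γ (g * w * g⁻¹) := by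
  by_cases h1 : w = 1
  · subst h1
    simp [pgen_one]
  · rw [pgen, dif_pos ⟨h1, hw⟩]
    rfl

/-- `⟨γ⟩ m = ψ(m) ⟨γ⟩`, where `ψ` is conjugation by `γ`. -/
lemma gar_mul (m : PosMonoid cs γ) :
    pgen cs γ γ * m = conjHom γ (mul_inv_cancel_right γ γ) m * pgen cs γ γ := by
  induction m using pos_induction with
  | one => rw [map_one, one_mul, mul_one]
  | mul w hw m ih =>
    have hγw : γ * w⁻¹ * w = γ := inv_mul_cancel_right γ w
    have h1 : pgen cs γ (γ * w⁻¹) * pgen cs γ w = pgen cs γ γ := by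
      have := pgen_mul (cs := cs) (γ := γ) (u := γ * w⁻¹) (v := w) (by rw [hγw]; exact hw.mul_inv)
        (by rw [hγw]; exact rle_refl γ)
      rwa [hγw] at this
    have h2 : pgen cs γ (γ * w * γ⁻¹) * pgen cs γ (γ * w⁻¹) = pgen cs γ γ := by
      have e : γ * w * γ⁻¹ * (γ * w⁻¹) = γ := by group
      have h3 := hw.conj γ
      rw [mul_inv_cancel_right] at h3
      have := pgen_mul (cs := cs) (γ := γ) (u := γ * w * γ⁻¹) (v := γ * w⁻¹) (by rwa [e])
        (by rw [e]; exact rle_refl γ)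
      rwa [e] at this
    rw [map_mul, conjHom_pgen _ hw, mul_assoc, ← ih, ← mul_assoc, ← mul_assoc]
    congr 1
    nth_rewrite 1 [← h2]
    rw [mul_assoc, h1]

lemma conjHom_conjHom (m : PosMonoid cs γ) :
    conjHom γ (mul_inv_cancel_right γ γ) (conjHom γ⁻¹ (by group) m) = m := by
  induction m using pos_induction with
  | one => simp
  | mul w hw m ih =>
    have hw' := hw.conj γ⁻¹
    rw [show γ⁻¹ * γ * γ⁻¹⁻¹ = γ by group] at hw'
    rw [map_mul, map_mul, ih, conjHom_pgen _ hw, conjHom_pgen _ hw']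
    congr 2
    group

lemma gar_right_cancel (hγ : IsCoxeterElement cs γ) {m m' : PosMonoid cs γ} (h : m * pgen cs γ γ = m' * pgen cs γ γ) :
    m = m' := by
  rw [← conjHom_conjHom m, ← conjHom_conjHom m', ← gar_mul, ← gar_mul] at h
  have := gar_left_cancel hγ h
  rw [← conjHom_conjHom m, this, conjHom_conjHom]

lemma gar_pow_left_cancel (hγ : IsCoxeterElement cs γ) (k : ℕ) {m m' : PosMonoid cs γ}
    (h : pgen cs γ γ ^ k * m = pgen cs γ γ ^ k * m') : m = m' := by
  induction k with
  | zero => simpa using h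
  | succ k ih =>
    rw [pow_succ', mul_assoc, mul_assoc] at h
    exact ih (gar_left_cancel hγ h)

lemma gar_pow_right_cancel (hγ : IsCoxeterElement cs γ) (k : ℕ) {m m' : PosMonoid cs γ}
    (h : m * pgen cs γ γ ^ k = m' * pgen cs γ γ ^ k) : m = m' := by
  induction k with
  | zero => simpa using h
  | succ k ih =>
    rw [pow_succ, ← mul_assoc, ← mul_assoc] at h
    exact ih (gar_right_cancel hγ h)

lemma gar_pow_mul (k : ℕ) (m : PosMonoid cs γ) :
    ∃ m', pgen cs γ γ ^ k * m = m' * pgen cs γ γ ^ k := by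
  induction k with
  | zero => exact ⟨m, by simp⟩
  | succ k ih =>
    obtain ⟨m', h⟩ := ih
    refine ⟨conjHom γ (mul_inv_cancel_right γ γ) m', ?_⟩
    rw [pow_succ', mul_assoc, h, ← mul_assoc, gar_mul, mul_assoc]

/-- The powers of the Garside element `⟨γ⟩`. -/
noncomputable abbrev garPowers (cs : CoxeterSystem M W) (γ : W) : Submonoid (PosMonoid cs γ) :=
  Submonoid.powers (pgen cs γ γ)

lemma garPowers_ore (m : PosMonoid cs γ) (s : garPowers cs γ) :
    ∃ m', (s : PosMonoid cs γ) * m = m' * s := by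
  obtain ⟨_, k, rfl⟩ := s
  exact gar_pow_mul k m

/-- The powers of the Garside element form an Ore set. -/
noncomputable abbrev garOre : OreLocalization.OreSet (garPowers cs γ) where
  ore_right_cancel m m' s h := by
    obtain ⟨_, k, rfl⟩ := s
    exact ⟨1, by rw [gar_pow_right_cancel hγ k h]⟩
  oreNum m s := (garPowers_ore m s).choose
  oreDenom _ s := s
  ore_eq m s := (garPowers_ore m s).choose_spec

theorem canHom_injective (hγ : IsCoxeterElement cs γ) : Function.Injective (canHom cs γ) := by
  let _ := garOre hγ
  set ι : PosMonoid cs γ →* OreLocalization (garPowers cs γ) (PosMonoid cs γ) :=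
    OreLocalization.numeratorHom with hι
  have hinj : Function.Injective ι := by
    intro m m' h
    obtain ⟨⟨_, k, rfl⟩, v, h1, h2⟩ := OreLocalization.oreDiv_eq_iff.1 h
    simp only [OneMemClass.coe_one, mul_one] at h2
    refine (gar_pow_left_cancel hγ k ?_).symm
    rw [← h2] at h1
    exact h1
  have hγu : IsUnit (ι (pgen cs γ γ)) :=
    OreLocalization.numerator_isUnit (S := garPowers cs γ) ⟨_, Submonoid.mem_powers _⟩
  have hunit (w : NCGen cs γ) : IsUnit (ι (PresentedMonoid.of _ w)) := by
    obtain ⟨d, hd⟩ := hγu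
    have hw := w.2.2
    have e : γ * w.1⁻¹ * w.1 = γ := inv_mul_cancel_right γ w.1
    have e' : w.1 * (w.1⁻¹ * γ) = γ := mul_inv_cancel_left w.1 γ
    have h1 := pgen_mul (cs := cs) (γ := γ) (u := γ * w.1⁻¹) (v := w.1)
      (by rw [e]; exact hw.mul_inv) (by rw [e]; exact rle_refl γ)
    have h2 := pgen_mul (cs := cs) (γ := γ) (u := w.1) (v := w.1⁻¹ * γ)
      (by rwa [e']) (by rw [e']; exact rle_refl γ)
    rw [e] at h1
    rw [e'] at h2
    rw [← pgen_of, isUnit_iff_exists_and_exists]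
    refine ⟨⟨ι (pgen cs γ (w.1⁻¹ * γ)) * ↑d⁻¹, ?_⟩, ⟨↑d⁻¹ * ι (pgen cs γ (γ * w.1⁻¹)), ?_⟩⟩
    · rw [← mul_assoc, ← map_mul, h2, ← hd, Units.mul_inv]
    · rw [mul_assoc, ← map_mul, h1, ← hd, Units.inv_mul]
  -- The localization map factors through `canHom`.
  have hrel : ∀ r ∈ posetGroupRels cs γ, FreeGroup.lift (fun w => (hunit w).unit) r = 1 := by
    rintro _ ⟨w₁, w₂, w₃, rfl, hmul, hlen⟩
    simp only [map_mul, map_inv, FreeGroup.lift_apply_of, mul_inv_eq_one]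
    refine Units.ext ?_
    simp only [Units.val_mul, IsUnit.unit_spec, ← map_mul]
    exact congrArg ι (PresentedMonoid.mk_eq_mk_of_rel ⟨w₁, w₂, w₃, rfl, rfl, hmul, hlen⟩)
  have hcomp : ((Units.coeHom _).comp (PresentedGroup.toGroup hrel)).comp (canHom cs γ) = ι := by
    refine PresentedMonoid.ext _ fun w => ?_
    change Units.val (PresentedGroup.toGroup hrel (PresentedGroup.of w)) = _
    rw [PresentedGroup.toGroup.of, IsUnit.unit_spec]
  refine Function.Injective.of_comp (f := (Units.coeHom _).comp (PresentedGroup.toGroup hrel)) ?_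
  rw [← MonoidHom.coe_comp, hcomp]
  exact hinj

end Garside

end NonCrossing

/-- Brady's embedding theorem: the positive monoid `Γ₊(W,γ)` embeds into the poset
group `Γ(W,γ)`; equivalently, positive words equal in `Γ` are positively equal. -/
theorem posMonoid_embeds [Fintype B] [Fintype W] (cs : CoxeterSystem M W) (γ : W)
    (hγ : IsCoxeterElement cs γ) :
    Function.Injective (canHom cs γ) := by
  exact NonCrossing.canHom_injective hγ
end

section
/- For every g ∈ Γ = Γ(W,γ) there exists k ∈ ℕ such that ⟨γ⟩ᵏ · g lies in the image of the canonical homomorphism Γ₊ → Γ, i.e. ⟨γ⟩ᵏ g can be represented by a positive word in the generators. -/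
/-!
Write `c = ⟨γ⟩`. Reflection length is invariant under conjugation, so if `w ∈ [1,γ]` then its
left complement `γ w⁻¹` is also in `[1,γ]`, and `⟨γ w⁻¹⟩⟨w⟩ = c`. Hence `c ⟨w⟩⁻¹ = ⟨γ w⁻¹⟩` is
positive (or trivial, if `w = γ`). Applying this twice, `c ⟨w⟩ c⁻¹ = ⟨γ w γ⁻¹⟩`, so conjugation
by `c` preserves the submonoid of positive elements. If `p = c ^ k * g` is positive, then
so are `c ^ k * (g * ⟨w⟩) = p * ⟨w⟩` and
`c ^ (k + 1) * (g * ⟨w⟩⁻¹) = (c * p * c⁻¹) * (c * ⟨w⟩⁻¹)`; induction on a word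
for `g` finishes the proof.
-/

variable {B : Type*} {W : Type*} [Group W] {M : CoxeterMatrix B}

theorem rlen_one (cs : CoxeterSystem M W) : rlen cs (1 : W) = 0 :=
  Nat.sInf_eq_zero.mpr (Or.inl ⟨[], by simp, rfl, rfl⟩)

theorem rle_refl (cs : CoxeterSystem M W) (w : W) : rle cs w w := by
  unfold rle
  rw [inv_mul_cancel, rlen_one]
  omega

theorem rlen_conj (cs : CoxeterSystem M W) (v w : W) : rlen cs (v * w * v⁻¹) = rlen cs w := by
  have key : ∀ v w : W,
      {k | ∃ l : List W, (∀ t ∈ l, cs.IsReflection t) ∧ l.length = k ∧ l.prod = w} ⊆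
      {k | ∃ l : List W, (∀ t ∈ l, cs.IsReflection t) ∧ l.length = k ∧
        l.prod = v * w * v⁻¹} := by
    rintro v w k ⟨l, hl, rfl, rfl⟩
    refine ⟨l.map (MulAut.conj v), ?_, by simp, ?_⟩
    · intro t ht
      obtain ⟨s, hs, rfl⟩ := List.mem_map.mp ht
      exact (hl s hs).conj v
    · rw [← map_list_prod, MulAut.conj_apply]
  unfold rlen
  congr 1
  refine Set.Subset.antisymm ?_ (key v w)
  have h := key v⁻¹ (v * w * v⁻¹)
  have e : v⁻¹ * (v * w * v⁻¹) * v⁻¹⁻¹ = w := by group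
  rwa [e] at h

/-- Conjugation by `w` exchanges the two complements `γ w⁻¹` and `w⁻¹ γ` of `w`. -/
theorem rlen_left_compl (cs : CoxeterSystem M W) {γ w : W} (h : rle cs w γ) :
    rlen cs (γ * w⁻¹) + rlen cs w = rlen cs γ := by
  have e : γ * w⁻¹ = w * (w⁻¹ * γ) * w⁻¹ := by group
  rw [e, rlen_conj, h, add_comm]

theorem rle_left_compl (cs : CoxeterSystem M W) {γ w : W} (h : rle cs w γ) :
    rle cs (γ * w⁻¹) γ := by
  have e : (γ * w⁻¹)⁻¹ * γ = w := by group
  rw [rle, e, rlen_left_compl cs h]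

theorem of_mul_of (cs : CoxeterSystem M W) (γ : W) (w₁ w₂ w₃ : NCGen cs γ)
    (hmul : (w₁ : W) * w₂ = w₃) (hlen : rlen cs (w₁ : W) + rlen cs (w₂ : W) = rlen cs (w₃ : W)) :
    PresentedGroup.of (rels := posetGroupRels cs γ) w₁ * PresentedGroup.of w₂ =
      PresentedGroup.of w₃ := by
  have hmem : FreeGroup.of w₁ * FreeGroup.of w₂ * (FreeGroup.of w₃)⁻¹ ∈
      posetGroupRels cs γ := ⟨w₁, w₂, w₃, rfl, hmul, hlen⟩
  exact mul_inv_eq_one.mp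
    ((QuotientGroup.eq_one_iff _).mpr (Subgroup.subset_normalClosure hmem))

theorem of_mem_range (cs : CoxeterSystem M W) (γ : W) (x : NCGen cs γ) :
    PresentedGroup.of (rels := posetGroupRels cs γ) x ∈ MonoidHom.mrange (canHom cs γ) :=
  ⟨PresentedMonoid.of _ x, by simp [canHom]⟩

/-- The generator attached to the left complement `γ w⁻¹`, for `w ≠ γ`. -/
def leftCompl (cs : CoxeterSystem M W) (γ : W) (x : NCGen cs γ) (hx : (x : W) ≠ γ) :
    NCGen cs γ :=
  ⟨γ * (x : W)⁻¹, fun h => hx (mul_inv_eq_one.mp h).symm, rle_left_compl cs x.2.2⟩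

theorem leftCompl_mul (cs : CoxeterSystem M W) (γ : W) (hγ1 : γ ≠ 1) (x : NCGen cs γ)
    (hx : (x : W) ≠ γ) :
    PresentedGroup.of (rels := posetGroupRels cs γ) (leftCompl cs γ x hx) * PresentedGroup.of x =
      PresentedGroup.of ⟨γ, hγ1, rle_refl cs γ⟩ :=
  of_mul_of cs γ _ _ _ (by simp [leftCompl]) (rlen_left_compl cs x.2.2)

theorem gamma_mul_inv_mem (cs : CoxeterSystem M W) (γ : W) (hγ1 : γ ≠ 1) (x : NCGen cs γ) :
    PresentedGroup.of (rels := posetGroupRels cs γ) ⟨γ, hγ1, rle_refl cs γ⟩ *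
      (PresentedGroup.of x)⁻¹ ∈ MonoidHom.mrange (canHom cs γ) := by
  by_cases hx : (x : W) = γ
  · have e : x = ⟨γ, hγ1, rle_refl cs γ⟩ := Subtype.ext hx
    rw [e, mul_inv_cancel]
    exact one_mem _
  · rw [← leftCompl_mul cs γ hγ1 x hx, mul_inv_cancel_right]
    exact of_mem_range cs γ _

theorem gamma_conj_of_mem (cs : CoxeterSystem M W) (γ : W) (hγ1 : γ ≠ 1) (x : NCGen cs γ) :
    PresentedGroup.of (rels := posetGroupRels cs γ) ⟨γ, hγ1, rle_refl cs γ⟩ *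
      PresentedGroup.of x * (PresentedGroup.of ⟨γ, hγ1, rle_refl cs γ⟩)⁻¹ ∈
        MonoidHom.mrange (canHom cs γ) := by
  by_cases hx : (x : W) = γ
  · have e : x = ⟨γ, hγ1, rle_refl cs γ⟩ := Subtype.ext hx
    rw [e, mul_inv_cancel_right]
    exact of_mem_range cs γ _
  · -- With `y = γ x⁻¹` the relation `⟨y⟩⟨x⟩ = c` gives `c ⟨x⟩ c⁻¹ = c ⟨y⟩⁻¹`.
    have h := gamma_mul_inv_mem cs γ hγ1 (leftCompl cs γ x hx)
    convert h using 1
    rw [← leftCompl_mul cs γ hγ1 x hx]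
    group

theorem gamma_conj_mem (cs : CoxeterSystem M W) (γ : W) (hγ1 : γ ≠ 1) {p : PosetGroup cs γ}
    (hp : p ∈ MonoidHom.mrange (canHom cs γ)) :
    PresentedGroup.of (rels := posetGroupRels cs γ) ⟨γ, hγ1, rle_refl cs γ⟩ * p *
      (PresentedGroup.of ⟨γ, hγ1, rle_refl cs γ⟩)⁻¹ ∈ MonoidHom.mrange (canHom cs γ) := by
  obtain ⟨m, rfl⟩ := hp
  induction m using PresentedMonoid.inductionOn with
  | _ m =>
  induction m using FreeMonoid.inductionOn' with
  | one =>
    rw [map_one, map_one, mul_one, mul_inv_cancel]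
    exact one_mem _
  | of_mul x m ih =>
    have h := mul_mem (gamma_conj_of_mem cs γ hγ1 x) ih
    have e : canHom cs γ (PresentedMonoid.mk _ (FreeMonoid.of x)) = PresentedGroup.of x := by
      simp [canHom, ← PresentedMonoid.of.eq_1]
    rw [map_mul, map_mul, e]
    convert h using 1
    group

/-- Brady's Lemma: for every `g ∈ Γ(W,γ)` there is `k ∈ ℕ` such that `⟨γ⟩ᵏ g` is
represented by a positive word, i.e. lies in the image of `Γ₊(W,γ) → Γ(W,γ)`. -/
theorem gamma_power_mul_positive [Fintype B] [Fintype W] (cs : CoxeterSystem M W) (γ : W)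
    (hγ : IsCoxeterElement cs γ) (hγ1 : γ ≠ 1) (g : PosetGroup cs γ) :
    ∃ k : ℕ,
      (PresentedGroup.of (rels := posetGroupRels cs γ) ⟨γ, hγ1, rle_refl cs γ⟩) ^ k * g ∈
        Set.range (canHom cs γ) := by
  have hg : g ∈ Subgroup.closure (Set.range (PresentedGroup.of (rels := posetGroupRels cs γ))) := by
    rw [PresentedGroup.closure_range_of]
    exact Subgroup.mem_top g
  induction hg using Subgroup.closure_induction_right with
  | one => exact ⟨0, 1, by simp⟩
  | mul_right g _ y hy ih =>
    obtain ⟨x, rfl⟩ := hy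
    obtain ⟨k, hk⟩ := ih
    refine ⟨k, ?_⟩
    rw [← mul_assoc]
    exact (MonoidHom.mrange (canHom cs γ)).mul_mem hk (of_mem_range cs γ x)
  | mul_inv_cancel g _ y hy ih =>
    obtain ⟨x, rfl⟩ := hy
    obtain ⟨k, hk⟩ := ih
    refine ⟨k + 1, ?_⟩
    have h := (MonoidHom.mrange (canHom cs γ)).mul_mem (gamma_conj_mem cs γ hγ1 hk)
      (gamma_mul_inv_mem cs γ hγ1 x)
    rw [pow_succ']
    change _ ∈ MonoidHom.mrange (canHom cs γ)
    convert h using 1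
    group
end
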